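/- arXiv:2205.00494 — 16 statements merged into one kernel-verified Lean document; each statement's English description precedes it below -/
import Mathlib

section
/- Let A = Γ_θ − Γ̃, the upper triangular matrix with A_{ii} = 2θ + G/2 = Gλ and A_{ij} = G for j > i, where λ = 2θ/G + 1/2. Then A is invertible and its inverse B = A^{−1} is the upper triangular matrix with entries B_{ii} = 1/(Gλ), B_{ij} = −(λ−1)^{j−i−1}/(G·λ^{j−i+1}) for j > i, and B_{ij} = 0 for j < i. -/
open Matrix

/-- Entries of the inverse, indexed by naturals. -/
noncomputable def bEnt (G lam : ℝ) (i j : ℕ) : ℝ :=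
  if i = j then 1/(G*lam)
  else if i < j then -((lam - 1)^(j - i - 1)) / (G * lam^(j - i + 1))
  else 0

lemma bEnt_sum_low (G lam : ℝ) (i k : ℕ) (h : k ≤ i) :
    ∑ j ∈ Finset.range k, bEnt G lam i j = 0 := by
  apply Finset.sum_eq_zero
  intro j hj
  have := Finset.mem_range.mp hj
  rw [bEnt, if_neg (by omega), if_neg (by omega)]

lemma bEnt_sum (G lam : ℝ) (hG : G ≠ 0) (hl : lam ≠ 0) (i d : ℕ) :
    ∑ j ∈ Finset.range (i + d + 1), bEnt G lam i j = (lam - 1)^d / (G * lam^(d+1)) := by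
  induction d with
  | zero =>
    rw [Finset.sum_range_succ, bEnt_sum_low _ _ _ _ (by omega)]
    simp [bEnt]
  | succ d ih =>
    rw [Finset.sum_range_succ, show i + (d + 1) = i + d + 1 by omega, ih, bEnt,
      if_neg (by omega), if_pos (by omega), show i + d + 1 - i - 1 = d by omega,
      show i + d + 1 - i + 1 = d + 2 by omega]
    field_simp
    ring

lemma bEnt_mul (G lam : ℝ) (hG : G ≠ 0) (hl : lam ≠ 0) (i k n : ℕ) (hk : k < n) :
    ∑ j ∈ Finset.range n, bEnt G lam i j * (if j = k then G * lam else if j < k then G else 0)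
      = if i = k then 1 else 0 := by
  have h1 : ∑ j ∈ Finset.range n,
      bEnt G lam i j * (if j = k then G * lam else if j < k then G else 0)
      = (∑ j ∈ Finset.range k, bEnt G lam i j) * G + bEnt G lam i k * (G * lam) := by
    rw [← Finset.sum_subset (Finset.range_subset_range.mpr (show k + 1 ≤ n from hk)),
      Finset.sum_range_succ, Finset.sum_mul, if_pos rfl]
    · congr 1
      apply Finset.sum_congr rfl
      intro j hj
      have := Finset.mem_range.mp hj
      rw [if_neg (by omega), if_pos this]
    · intro j _ hj
      have : ¬ j < k + 1 := fun h => hj (Finset.mem_range.mpr h)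
      rw [if_neg (by omega), if_neg (by omega), mul_zero]
  rw [h1]
  rcases lt_trichotomy i k with h | h | h
  · obtain ⟨d, rfl⟩ : ∃ d, k = i + d + 1 := ⟨k - i - 1, by omega⟩
    rw [bEnt_sum G lam hG hl, bEnt, if_neg (by omega), if_pos h, if_neg (by omega),
      show i + d + 1 - i - 1 = d by omega, show i + d + 1 - i + 1 = d + 2 by omega]
    field_simp
    ring
  · subst h
    rw [bEnt_sum_low _ _ _ _ le_rfl, bEnt, if_pos rfl, if_pos rfl]
    field_simp
    ring
  · rw [bEnt_sum_low _ _ _ _ h.le, bEnt, if_neg (by omega), if_neg (by omega), if_neg (by omega)]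
    ring

/-- Let `A = Γ_θ − Γ̃` be the upper triangular matrix with `A_{ii} = 2θ + G/2 = Gλ`
and `A_{ij} = G` for `j > i`, where `λ = 2θ/G + 1/2`. Then `A` is invertible and its
inverse `B = A⁻¹` is upper triangular with `B_{ii} = 1/(Gλ)`,
`B_{ij} = −(λ−1)^{j−i−1}/(G·λ^{j−i+1})` for `j > i`, and `B_{ij} = 0` for `j < i`. -/
theorem stmt_1 (N : ℕ) (hN : 1 ≤ N) (G θ : ℝ) (hG : 0 < G) (hθ : 0 < θ)
    (lam : ℝ) (hlam : lam = 2*θ/G + 1/2)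
    (A B : Matrix (Fin (N+1)) (Fin (N+1)) ℝ)
    (hA : ∀ i j : Fin (N+1), A i j =
      if i = j then 2*θ + G/2 else if i < j then G else 0)
    (hB : ∀ i j : Fin (N+1), B i j =
      if i = j then 1/(G*lam)
      else if i < j then -((lam - 1)^(j.val - i.val - 1)) / (G * lam^(j.val - i.val + 1))
      else 0) :
    IsUnit A ∧ A⁻¹ = B := by
  have hl : lam ≠ 0 := by rw [hlam]; positivity
  have hGl : 2*θ + G/2 = G * lam := by rw [hlam]; field_simp
  have hBA : B * A = 1 := by
    ext i k
    rw [Matrix.mul_apply, Matrix.one_apply]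
    have h := bEnt_mul G lam hG.ne' hl i.val k.val (N+1) k.isLt
    rw [← Fin.sum_univ_eq_sum_range (fun j => bEnt G lam i.val j *
      (if j = k.val then G * lam else if j < k.val then G else 0))] at h
    simp only [Fin.ext_iff]
    rw [← h]
    apply Finset.sum_congr rfl
    intro j _
    rw [hA, hB, hGl]
    simp only [bEnt, Fin.ext_iff, Fin.lt_def]
  exact ⟨IsUnit.of_mul_eq_one_right B hBA, Matrix.inv_eq_left_inv hBA⟩
end

section
/- Let A = Γ_θ − Γ̃. Then 1 + G·eᵀA^{−T}e ≠ 0, the matrix Γ_θ + Γ̃ is invertible, and its inverse satisfies the Sherman–Morrison identity (Γ_θ + Γ̃)^{−1} = A^{−T} − G·(A^{−T}e·eᵀA^{−T})/(1 + G·eᵀA^{−T}e), where A^{−T} denotes the inverse of the transpose of A. -/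
open Matrix

/-- Sherman–Morrison identity for `Γ_θ + Γ̃ = Aᵀ + G·eeᵀ` with `A = Γ_θ − Γ̃`:
`1 + G·eᵀA^{−T}e ≠ 0`, the matrix `Γ_θ + Γ̃` is invertible, and
`(Γ_θ + Γ̃)⁻¹ = A^{−T} − G·(A^{−T}e·eᵀA^{−T})/(1 + G·eᵀA^{−T}e)`. -/
theorem stmt_2 (N : ℕ) (hN : 1 ≤ N) (G θ : ℝ) (hG : 0 < G) (hθ : 0 < θ)
    (Γ Γθ Γt A : Matrix (Fin (N+1)) (Fin (N+1)) ℝ)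
    (hΓ : ∀ i j : Fin (N+1), Γ i j = G)
    (hΓθ : Γθ = Γ + (2*θ) • (1 : Matrix (Fin (N+1)) (Fin (N+1)) ℝ))
    (hΓt : ∀ i j : Fin (N+1), Γt i j = if j < i then G else if i = j then G/2 else 0)
    (hA : A = Γθ - Γt)
    (e : Fin (N+1) → ℝ) (he : e = fun _ => 1) :
    1 + G * (e ⬝ᵥ ((Aᵀ)⁻¹ *ᵥ e)) ≠ 0 ∧
    IsUnit (Γθ + Γt) ∧
    (Γθ + Γt)⁻¹ = (Aᵀ)⁻¹ -
      (G / (1 + G * (e ⬝ᵥ ((Aᵀ)⁻¹ *ᵥ e)))) •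
        Matrix.vecMulVec ((Aᵀ)⁻¹ *ᵥ e) (Matrix.vecMul e (Aᵀ)⁻¹) := by
  have hdet : IsUnit (Aᵀ).det := by
    rw [Matrix.det_transpose, Matrix.det_of_upperTriangular]
    · rw [isUnit_iff_ne_zero]
      apply Finset.prod_ne_zero_iff.mpr
      intro i _
      simp only [hA, hΓθ, Matrix.sub_apply, Matrix.add_apply, Matrix.smul_apply, hΓ, hΓt,
        Matrix.one_apply_eq, lt_irrefl, if_true, if_false, smul_eq_mul]
      apply ne_of_gt
      linarith
    · intro i j hij
      have hij' : j < i := hij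
      simp [hA, hΓθ, hΓ, hΓt, hij', hij'.ne']
  have hsum : Γθ + Γt = Aᵀ + G • Matrix.vecMulVec e e := by
    ext i j
    rcases lt_trichotomy i j with h | h | h
    · simp [hA, hΓθ, hΓ, hΓt, he, Matrix.vecMulVec_apply, h, h.ne, h.ne', h.not_gt]
    · subst h
      simp [hA, hΓθ, hΓ, hΓt, he, Matrix.vecMulVec_apply]
      ring
    · simp [hA, hΓθ, hΓ, hΓt, he, Matrix.vecMulVec_apply, h, h.ne, h.ne', h.not_gt]
  have hsym : Aᵀ + A = G • Matrix.vecMulVec e e + (4 * θ) • (1 : Matrix _ _ ℝ) := by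
    ext i j
    rcases lt_trichotomy i j with h | h | h
    · simp [hA, hΓθ, hΓ, hΓt, he, Matrix.vecMulVec_apply, h, h.ne, h.ne', h.not_gt]
    · subst h
      simp [hA, hΓθ, hΓ, hΓt, he, Matrix.vecMulVec_apply]
      ring
    · simp [hA, hΓθ, hΓ, hΓt, he, Matrix.vecMulVec_apply, h, h.ne, h.ne', h.not_gt]
  clear hΓ hΓθ hΓt hA he
  have hBS : Aᵀ * (Aᵀ)⁻¹ = 1 := Matrix.mul_nonsing_inv _ hdet
  generalize (Aᵀ)⁻¹ = S at *
  have hv : Aᵀ *ᵥ (S *ᵥ e) = e := by rw [Matrix.mulVec_mulVec, hBS, Matrix.one_mulVec]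
  have hpos : 0 ≤ e ⬝ᵥ (S *ᵥ e) := by
    generalize S *ᵥ e = v at *
    have h1 : v ⬝ᵥ (Aᵀ *ᵥ v) = e ⬝ᵥ v := by rw [hv, dotProduct_comm]
    have h2 : v ⬝ᵥ (A *ᵥ v) = e ⬝ᵥ v := by
      rw [Matrix.dotProduct_mulVec, ← Matrix.mulVec_transpose, hv]
    have h3 : v ⬝ᵥ ((Aᵀ + A) *ᵥ v) = G * (e ⬝ᵥ v) ^ 2 + 4 * θ * (v ⬝ᵥ v) := by
      rw [hsym, Matrix.add_mulVec, Matrix.smul_mulVec, Matrix.smul_mulVec, Matrix.one_mulVec,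
        Matrix.vecMulVec_mulVec, dotProduct_add, dotProduct_smul, dotProduct_smul]
      simp [dotProduct_comm v e]
      left
      ring
    rw [Matrix.add_mulVec, dotProduct_add, h1, h2] at h3
    have h4 : 0 ≤ v ⬝ᵥ v := Finset.sum_nonneg fun i _ => mul_self_nonneg _
    have : 0 ≤ G * (e ⬝ᵥ v) ^ 2 + 4 * θ * (v ⬝ᵥ v) := by positivity
    linarith
  have hne : 1 + G * (e ⬝ᵥ (S *ᵥ e)) ≠ 0 := by positivity
  have hmul : (Γθ + Γt) * (S - (G / (1 + G * (e ⬝ᵥ (S *ᵥ e)))) •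
      Matrix.vecMulVec (S *ᵥ e) (Matrix.vecMul e S)) = 1 := by
    rw [hsum, Matrix.add_mul, Matrix.mul_sub, Matrix.mul_sub, hBS, Matrix.mul_smul,
      Matrix.mul_vecMulVec, hv, Matrix.smul_mul, Matrix.smul_mul, Matrix.mul_smul,
      Matrix.vecMulVec_mul, Matrix.vecMulVec_mul_vecMulVec]
    ext i j
    simp only [Matrix.add_apply, Matrix.sub_apply, Matrix.smul_apply, Matrix.vecMulVec_apply,
      smul_eq_mul, Pi.smul_apply]
    field_simp
    ring
  exact ⟨hne, (Matrix.isUnit_iff_isUnit_det _).mpr (Matrix.isUnit_det_of_right_inverse hmul),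
    Matrix.inv_eq_right_inv hmul⟩
end

section
/- Let A = Γ_θ − Γ̃. Then eᵀA^{−T}e ≠ 0, eᵀ(Γ_θ+Γ̃)^{−1}e ≠ 0, and the first fundamental solution satisfies v := (Γ_θ+Γ̃)^{−1}e / (eᵀ(Γ_θ+Γ̃)^{−1}e) = A^{−T}e / (eᵀA^{−T}e); moreover the second fundamental solution is w := (Γ_θ−Γ̃)^{−1}e / (eᵀ(Γ_θ−Γ̃)^{−1}e) = A^{−1}e / (eᵀA^{−1}e). -/
open Matrix

theorem quad_aux {n : ℕ} (C : Matrix (Fin n) (Fin n) ℝ) (e : Fin n → ℝ) (a g : ℝ)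
    (h : C + Cᵀ = a • (1 : Matrix (Fin n) (Fin n) ℝ) + g • vecMulVec e e) (x : Fin n → ℝ) :
    2 * (x ⬝ᵥ (C *ᵥ x)) = a * (x ⬝ᵥ x) + g * (e ⬝ᵥ x) ^ 2 := by
  have h1 : x ⬝ᵥ (Cᵀ *ᵥ x) = x ⬝ᵥ (C *ᵥ x) := by
    rw [mulVec_transpose, dotProduct_comm, ← dotProduct_mulVec]
  have h2 : x ⬝ᵥ ((C + Cᵀ) *ᵥ x) = 2 * (x ⬝ᵥ (C *ᵥ x)) := by
    rw [add_mulVec, dotProduct_add, h1]; ring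
  rw [← h2, h, add_mulVec, dotProduct_add, smul_mulVec, smul_mulVec, one_mulVec,
    dotProduct_smul, dotProduct_smul, vecMulVec_mulVec]
  simp only [smul_eq_mul, op_smul_eq_smul, dotProduct_smul]
  rw [dotProduct_comm x e]; ring

theorem unit_aux {n : ℕ} (C : Matrix (Fin n) (Fin n) ℝ) (e : Fin n → ℝ) (a g : ℝ)
    (ha : 0 < a) (hg : 0 ≤ g)
    (h : C + Cᵀ = a • (1 : Matrix (Fin n) (Fin n) ℝ) + g • vecMulVec e e) : IsUnit C.det := by
  rw [isUnit_iff_ne_zero]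
  intro h0
  obtain ⟨x, hx, hCx⟩ := exists_mulVec_eq_zero_iff.mpr h0
  have q := quad_aux C e a g h x
  rw [hCx, dotProduct_zero] at q
  have hp : 0 < x ⬝ᵥ x := lt_of_le_of_ne
    (Finset.sum_nonneg fun i _ => mul_self_nonneg (x i))
    (fun hh => hx (dotProduct_self_eq_zero.mp hh.symm))
  have := mul_pos ha hp
  have := mul_nonneg hg (sq_nonneg (e ⬝ᵥ x))
  linarith

/-- With `A = Γ_θ − Γ̃`: `eᵀA^{−T}e ≠ 0`, `eᵀ(Γ_θ+Γ̃)⁻¹e ≠ 0`, the first fundamental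
solution satisfies `v = (Γ_θ+Γ̃)⁻¹e/(eᵀ(Γ_θ+Γ̃)⁻¹e) = A^{−T}e/(eᵀA^{−T}e)`, and the
second fundamental solution is `w = (Γ_θ−Γ̃)⁻¹e/(eᵀ(Γ_θ−Γ̃)⁻¹e) = A⁻¹e/(eᵀA⁻¹e)`. -/
theorem stmt_3 (N : ℕ) (hN : 1 ≤ N) (G θ : ℝ) (hG : 0 < G) (hθ : 0 < θ)
    (Γ Γθ Γt A : Matrix (Fin (N+1)) (Fin (N+1)) ℝ)
    (hΓ : ∀ i j : Fin (N+1), Γ i j = G)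
    (hΓθ : Γθ = Γ + (2*θ) • (1 : Matrix (Fin (N+1)) (Fin (N+1)) ℝ))
    (hΓt : ∀ i j : Fin (N+1), Γt i j = if j < i then G else if i = j then G/2 else 0)
    (hA : A = Γθ - Γt)
    (e : Fin (N+1) → ℝ) (he : e = fun _ => 1) :
    e ⬝ᵥ ((Aᵀ)⁻¹ *ᵥ e) ≠ 0 ∧
    e ⬝ᵥ ((Γθ + Γt)⁻¹ *ᵥ e) ≠ 0 ∧
    (e ⬝ᵥ ((Γθ + Γt)⁻¹ *ᵥ e))⁻¹ • ((Γθ + Γt)⁻¹ *ᵥ e)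
      = (e ⬝ᵥ ((Aᵀ)⁻¹ *ᵥ e))⁻¹ • ((Aᵀ)⁻¹ *ᵥ e) ∧
    (e ⬝ᵥ ((Γθ - Γt)⁻¹ *ᵥ e))⁻¹ • ((Γθ - Γt)⁻¹ *ᵥ e)
      = (e ⬝ᵥ (A⁻¹ *ᵥ e))⁻¹ • (A⁻¹ *ᵥ e) := by
  have hM : Aᵀ + Aᵀᵀ = (4*θ) • (1 : Matrix (Fin (N+1)) (Fin (N+1)) ℝ) + G • vecMulVec e e := by
    ext i j
    simp only [hA, hΓθ, he, Matrix.add_apply, Matrix.sub_apply, transpose_apply, Matrix.smul_apply, hΓ, hΓt,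
      vecMulVec_apply, one_apply, smul_eq_mul]
    rcases lt_trichotomy i j with h | h | h
    · simp [h, h.ne, h.ne', h.not_gt]
    · subst h; simp; ring
    · simp [h, h.ne, h.ne', h.not_gt]
  have hBA : Γθ + Γt = Aᵀ + G • vecMulVec e e := by
    ext i j
    simp only [hA, hΓθ, he, Matrix.add_apply, Matrix.sub_apply, transpose_apply, Matrix.smul_apply, hΓ, hΓt,
      vecMulVec_apply, one_apply, smul_eq_mul]
    rcases lt_trichotomy i j with h | h | h
    · simp [h, h.ne, h.ne', h.not_gt]
    · subst h; simp; ring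
    · simp [h, h.ne, h.ne', h.not_gt]
  have hB : (Γθ + Γt) + (Γθ + Γt)ᵀ
      = (4*θ) • (1 : Matrix (Fin (N+1)) (Fin (N+1)) ℝ) + (3*G) • vecMulVec e e := by
    rw [hBA, transpose_add, transpose_smul, transpose_vecMulVec, add_add_add_comm, hM]
    module
  have uM := unit_aux _ e _ _ (by positivity) hG.le hM
  have uB := unit_aux _ e _ _ (by positivity) (by positivity) hB
  obtain ⟨x, hx⟩ : ∃ x, x = (Aᵀ)⁻¹ *ᵥ e := ⟨_, rfl⟩
  have hMx : Aᵀ *ᵥ x = e := by rw [hx, mulVec_mulVec, mul_nonsing_inv _ uM, one_mulVec]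
  have hx0 : x ≠ 0 := by
    rintro rfl
    rw [mulVec_zero, he] at hMx
    exact zero_ne_one (congrFun hMx 0)
  have hp : 0 < x ⬝ᵥ x := lt_of_le_of_ne
    (Finset.sum_nonneg fun i _ => mul_self_nonneg (x i))
    (fun hh => hx0 (dotProduct_self_eq_zero.mp hh.symm))
  have q := quad_aux _ e _ _ hM x
  rw [hMx, dotProduct_comm x e] at q
  have hs : 0 < e ⬝ᵥ x := by
    have := mul_pos hθ hp
    have := mul_nonneg hG.le (sq_nonneg (e ⬝ᵥ x))
    linarith
  have hc : 0 < 1 + G * (e ⬝ᵥ x) := by positivity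
  have hBx : (Γθ + Γt) *ᵥ x = (1 + G * (e ⬝ᵥ x)) • e := by
    rw [hBA, add_mulVec, hMx, smul_mulVec, vecMulVec_mulVec, op_smul_eq_smul]
    module
  have hy : (Γθ + Γt)⁻¹ *ᵥ e = (1 + G * (e ⬝ᵥ x))⁻¹ • x := by
    have h1 : (Γθ + Γt)⁻¹ *ᵥ ((Γθ + Γt) *ᵥ x) = x := by
      rw [mulVec_mulVec, nonsing_inv_mul _ uB, one_mulVec]
    rw [hBx, mulVec_smul] at h1
    rw [eq_inv_smul_iff₀ hc.ne', h1]
  rw [hy, ← hx, dotProduct_smul, smul_eq_mul]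
  refine ⟨hs.ne', (mul_pos (inv_pos.mpr hc) hs).ne', ?_, by rw [hA]⟩
  rw [smul_smul]
  congr 1
  field_simp
end

section
/- The fundamental solutions v and w of the Schied–Zhang market impact game with constant kernel G are equal up to time reversal: v_k = w_{N+2−k} for every k = 1, 2, …, N+1. -/
open Matrix

lemma quad_aux_s4 {n : ℕ} (A : Matrix (Fin n) (Fin n) ℝ) (a b : ℝ)
    (h : ∀ i j, A i j + A j i = (if i = j then a else 0) + b) (x : Fin n → ℝ) :
    2 * (x ⬝ᵥ (A *ᵥ x)) = a * (∑ i, x i ^ 2) + b * (∑ i, x i) ^ 2 := by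
  have h1 : x ⬝ᵥ (A *ᵥ x) = ∑ i, ∑ j, x i * A i j * x j := by
    simp only [dotProduct, mulVec, Finset.mul_sum, mul_assoc]
  have h2 : x ⬝ᵥ (A *ᵥ x) = ∑ i, ∑ j, x i * A j i * x j := by
    rw [h1, Finset.sum_comm]
    exact Finset.sum_congr rfl fun i _ => Finset.sum_congr rfl fun j _ => by ring
  have h3 : 2 * (x ⬝ᵥ (A *ᵥ x)) = ∑ i, ∑ j, x i * (A i j + A j i) * x j := by
    rw [two_mul]
    nth_rewrite 1 [h1]
    rw [h2, ← Finset.sum_add_distrib]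
    refine Finset.sum_congr rfl fun i _ => ?_
    rw [← Finset.sum_add_distrib]
    exact Finset.sum_congr rfl fun j _ => by ring
  rw [h3, sq (∑ i, x i), Finset.sum_mul_sum, Finset.mul_sum, Finset.mul_sum,
    ← Finset.sum_add_distrib]
  refine Finset.sum_congr rfl fun i _ => ?_
  simp only [h, mul_add, add_mul, Finset.sum_add_distrib, Finset.mul_sum]
  congr 1
  · simp; ring
  · exact Finset.sum_congr rfl fun j _ => by ring

lemma unit_aux_s4 {n : ℕ} (A : Matrix (Fin n) (Fin n) ℝ) (a b : ℝ) (ha : 0 < a) (hb : 0 ≤ b)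
    (h : ∀ i j, A i j + A j i = (if i = j then a else 0) + b) : IsUnit A.det := by
  rw [isUnit_iff_ne_zero]
  intro h0
  obtain ⟨x, hx, hAx⟩ := Matrix.exists_mulVec_eq_zero_iff.mpr h0
  have q := quad_aux_s4 A a b h x
  rw [hAx, dotProduct_zero, mul_zero] at q
  have h1 : 0 ≤ b * (∑ i, x i) ^ 2 := by positivity
  have h2 : 0 ≤ ∑ i, x i ^ 2 := Finset.sum_nonneg fun i _ => sq_nonneg _
  have h3 : ∑ i, x i ^ 2 = 0 := by nlinarith
  rw [Finset.sum_eq_zero_iff_of_nonneg (fun i _ => sq_nonneg _)] at h3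
  exact hx (funext fun i => by simpa using h3 i (Finset.mem_univ i))

/-- The fundamental solutions `v` and `w` of the Schied–Zhang market impact game with
constant kernel `G` are equal up to time reversal: `v_k = w_{N+2−k}` for `k = 1,…,N+1`
(in 0-based `Fin (N+1)` indexing: `v i = w i.rev`). -/
theorem stmt_4 (N : ℕ) (hN : 1 ≤ N) (G θ : ℝ) (hG : 0 < G) (hθ : 0 < θ)
    (Γ Γθ Γt : Matrix (Fin (N+1)) (Fin (N+1)) ℝ)
    (hΓ : ∀ i j : Fin (N+1), Γ i j = G)
    (hΓθ : Γθ = Γ + (2*θ) • (1 : Matrix (Fin (N+1)) (Fin (N+1)) ℝ))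
    (hΓt : ∀ i j : Fin (N+1), Γt i j = if j < i then G else if i = j then G/2 else 0)
    (e : Fin (N+1) → ℝ) (he : e = fun _ => 1)
    (v w : Fin (N+1) → ℝ)
    (hv : v = (e ⬝ᵥ ((Γθ + Γt)⁻¹ *ᵥ e))⁻¹ • ((Γθ + Γt)⁻¹ *ᵥ e))
    (hw : w = (e ⬝ᵥ ((Γθ - Γt)⁻¹ *ᵥ e))⁻¹ • ((Γθ - Γt)⁻¹ *ᵥ e)) :
    ∀ k : Fin (N+1), v k = w k.rev := by
  have hA : ∀ i j, (Γθ + Γt) i j + (Γθ + Γt) j i = (if i = j then 4 * θ else 0) + 3 * G := by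
    intro i j
    rcases lt_trichotomy i j with hij | hij | hij
    · simp [hΓθ, hΓ, hΓt, hij, hij.ne, hij.ne', hij.not_gt, Matrix.one_apply]; ring
    · subst hij
      simp [hΓθ, hΓ, hΓt]; ring
    · simp [hΓθ, hΓ, hΓt, hij, hij.ne, hij.ne', hij.not_gt, Matrix.one_apply]; ring
  have hB : ∀ i j, (Γθ - Γt) i j + (Γθ - Γt) j i = (if i = j then 4 * θ else 0) + G := by
    intro i j
    rcases lt_trichotomy i j with hij | hij | hij
    · simp [hΓθ, hΓ, hΓt, hij, hij.ne, hij.ne', hij.not_gt, Matrix.one_apply]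
    · subst hij
      simp [hΓθ, hΓ, hΓt]; ring
    · simp [hΓθ, hΓ, hΓt, hij, hij.ne, hij.ne', hij.not_gt, Matrix.one_apply]
  have hAB : ∀ i j, (Γθ + Γt) i j = (Γθ - Γt) i.rev j.rev + G := by
    intro i j
    rcases lt_trichotomy i j with hij | hij | hij
    · simp [hΓθ, hΓ, hΓt, hij, hij.ne, hij.ne', hij.not_gt, Matrix.one_apply]
    · subst hij
      simp [hΓθ, hΓ, hΓt]; ring
    · simp [hΓθ, hΓ, hΓt, hij, hij.ne, hij.ne', hij.not_gt, Matrix.one_apply]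
  have uA := unit_aux_s4 _ _ _ (by positivity) (by positivity) hA
  have uB := unit_aux_s4 _ _ _ (by positivity) hG.le hB
  generalize Γθ + Γt = A at *
  generalize Γθ - Γt = B at *
  obtain ⟨y, hy⟩ : ∃ y, y = B⁻¹ *ᵥ e := ⟨_, rfl⟩
  have hBy : B *ᵥ y = e := by
    rw [hy, mulVec_mulVec, Matrix.mul_nonsing_inv _ uB, one_mulVec]
  have hrev : ∀ f : Fin (N+1) → ℝ, ∑ j : Fin (N+1), f j.rev = ∑ j, f j := fun f =>
    Equiv.sum_comp Fin.revPerm f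
  obtain ⟨s, hs⟩ : ∃ s, s = ∑ j, y j := ⟨_, rfl⟩
  have hs0 : 0 ≤ s := by
    have q := quad_aux_s4 B _ _ hB y
    have h1 : y ⬝ᵥ e = s := by simp [he, dotProduct, hs]
    rw [hBy, h1] at q
    have h2 : 0 ≤ ∑ i, y i ^ 2 := Finset.sum_nonneg fun i _ => sq_nonneg _
    have : 0 ≤ 4 * θ * (∑ i, y i ^ 2) + G * (∑ i, y i) ^ 2 := by positivity
    linarith
  have hpos : 0 < 1 + G * s := by positivity
  have hAy : A *ᵥ (fun j => y j.rev) = (1 + G * s) • e := by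
    ext i
    have h1 : (A *ᵥ (fun j => y j.rev)) i = ∑ j : Fin (N+1), (B i.rev j.rev + G) * y j.rev := by
      simp only [mulVec, dotProduct, hAB]
    rw [h1, hrev (fun j => (B i.rev j + G) * y j)]
    simp only [add_mul, Finset.sum_add_distrib, ← Finset.mul_sum, ← hs]
    have h2 : (B *ᵥ y) i.rev = 1 := by rw [hBy, he]
    simp only [mulVec, dotProduct] at h2
    rw [h2, he]; simp
  have hAe : A⁻¹ *ᵥ e = (1 + G * s)⁻¹ • (fun j => y j.rev) := by
    have h1 : A⁻¹ *ᵥ (A *ᵥ (fun j => y j.rev)) = fun j => y j.rev := by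
      rw [mulVec_mulVec, Matrix.nonsing_inv_mul _ uA, one_mulVec]
    rw [← h1, hAy, mulVec_smul, smul_smul, inv_mul_cancel₀ hpos.ne', one_smul]
  have d1 : e ⬝ᵥ y = s := by simp [he, dotProduct, hs]
  have d2 : e ⬝ᵥ (fun j : Fin (N+1) => y j.rev) = s := by
    simp [he, dotProduct, hs, hrev y]
  intro k
  rw [hv, hw, ← hy, d1, hAe, dotProduct_smul, d2]
  simp only [Pi.smul_apply, smul_eq_mul, mul_inv, inv_inv]
  field_simp
end

section
/- Set λ = 2θ/G + 1/2 and a = 1 − 1/λ. Then the components of the fundamental solutions are v_n = a^{n−1} / (λ(1 − a^{N+1})) and w_n = a^{N+1−n} / (λ(1 − a^{N+1})) for every n = 1, 2, …, N+1 (with the convention a⁰ = 1). -/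
open Matrix

lemma aux_sum (a : ℝ) (i n : ℕ) :
    (∑ j ∈ Finset.range n, (if j < i then a^j else 0)) * (1 - a) = 1 - a^(min n i) := by
  induction n with
  | zero => simp
  | succ n ih =>
    rw [Finset.sum_range_succ, add_mul, ih]
    by_cases h : n < i
    · rw [min_eq_left h.le, min_eq_left (by omega : n + 1 ≤ i), if_pos h]; ring
    · rw [min_eq_right (by omega : i ≤ n), min_eq_right (by omega : i ≤ n + 1), if_neg h]; ring

lemma aux_sum_fin (a lam : ℝ) (hl : lam ≠ 0) (ha : a = 1 - 1/lam) (n : ℕ) (i : ℕ) (hi : i ≤ n) :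
    (∑ j : Fin n, (if j.val < i then a^j.val else 0)) = lam * (1 - a^i) := by
  have h := aux_sum a i n
  rw [min_eq_right hi] at h
  rw [Fin.sum_univ_eq_sum_range (fun j => if j < i then a^j else 0) n, ← h, ha]
  field_simp
  ring

lemma aux_solve {n : ℕ} (M : Matrix (Fin n) (Fin n) ℝ) (e x : Fin n → ℝ) (c S : ℝ)
    (hM : ∀ y, y ≠ 0 → y ⬝ᵥ (M *ᵥ y) ≠ 0) (hx : M *ᵥ x = c • e) (hc : c ≠ 0)
    (hS : e ⬝ᵥ x = S) (k : Fin n) :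
    ((e ⬝ᵥ (M⁻¹ *ᵥ e))⁻¹ • (M⁻¹ *ᵥ e)) k = x k / S := by
  have hdet : IsUnit M.det := by
    rw [isUnit_iff_ne_zero]
    intro h0
    obtain ⟨y, hy, hy0⟩ := Matrix.exists_mulVec_eq_zero_iff.mpr h0
    exact hM y hy (by rw [hy0]; simp)
  have h1 : M⁻¹ *ᵥ e = c⁻¹ • x := by
    have : x = c • (M⁻¹ *ᵥ e) := by
      rw [← Matrix.mulVec_smul, ← hx, Matrix.mulVec_mulVec, Matrix.nonsing_inv_mul _ hdet,
        Matrix.one_mulVec]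
    rw [this, smul_smul, inv_mul_cancel₀ hc, one_smul]
  rw [h1, dotProduct_smul, hS]
  simp only [Pi.smul_apply, smul_eq_mul, mul_inv, inv_inv]
  field_simp

/-- With `λ = 2θ/G + 1/2` and `a = 1 − 1/λ`, the components of the fundamental solutions
are `v_n = a^{n−1}/(λ(1 − a^{N+1}))` and `w_n = a^{N+1−n}/(λ(1 − a^{N+1}))` for
`n = 1,…,N+1` (0-based: `v i = a^i.val / …`, `w i = a^{N−i.val} / …`). -/
theorem stmt_5 (N : ℕ) (hN : 1 ≤ N) (G θ : ℝ) (hG : 0 < G) (hθ : 0 < θ)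
    (lam a : ℝ) (hlam : lam = 2*θ/G + 1/2) (ha : a = 1 - 1/lam)
    (Γ Γθ Γt : Matrix (Fin (N+1)) (Fin (N+1)) ℝ)
    (hΓ : ∀ i j : Fin (N+1), Γ i j = G)
    (hΓθ : Γθ = Γ + (2*θ) • (1 : Matrix (Fin (N+1)) (Fin (N+1)) ℝ))
    (hΓt : ∀ i j : Fin (N+1), Γt i j = if j < i then G else if i = j then G/2 else 0)
    (e : Fin (N+1) → ℝ) (he : e = fun _ => 1)
    (v w : Fin (N+1) → ℝ)
    (hv : v = (e ⬝ᵥ ((Γθ + Γt)⁻¹ *ᵥ e))⁻¹ • ((Γθ + Γt)⁻¹ *ᵥ e))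
    (hw : w = (e ⬝ᵥ ((Γθ - Γt)⁻¹ *ᵥ e))⁻¹ • ((Γθ - Γt)⁻¹ *ᵥ e)) :
    ∀ n : Fin (N+1),
      v n = a^(n.val) / (lam * (1 - a^(N+1))) ∧
      w n = a^(N - n.val) / (lam * (1 - a^(N+1))) := by
  have hθG : 0 < 2*θ/G := by positivity
  have hl : 1/2 < lam := by linarith
  have hl0 : 0 < lam := by linarith
  have hGl : G * lam = 2*θ + G/2 := by rw [hlam]; field_simp
  have hinv : 0 < 1/lam ∧ 1/lam < 2 := ⟨by positivity, by rw [div_lt_iff₀ hl0]; linarith⟩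
  have habs : |a| < 1 := by rw [abs_lt]; constructor <;> linarith [hinv.1, hinv.2]
  have hpow : a^(N+1) < 1 := by
    have h1 := pow_lt_one₀ (abs_nonneg a) habs (Nat.succ_ne_zero N)
    have h2 := le_abs_self (a^(N+1))
    rw [abs_pow] at h2
    exact lt_of_le_of_lt h2 h1
  -- the quadratic forms
  have hq1 : ∀ y : Fin (N+1) → ℝ, y ⬝ᵥ (Γθ *ᵥ y) = G * (∑ i, y i)^2 + 2*θ * (y ⬝ᵥ y) := by
    intro y
    have : Γ *ᵥ y = fun _ => G * ∑ i, y i := by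
      ext i; simp [Matrix.mulVec, dotProduct, hΓ, Finset.mul_sum]
    rw [hΓθ, Matrix.add_mulVec, dotProduct_add, this, Matrix.smul_mulVec, Matrix.one_mulVec,
      dotProduct_smul, smul_eq_mul]
    simp only [dotProduct]
    rw [← Finset.sum_mul]; ring
  have hq2 : ∀ y : Fin (N+1) → ℝ, y ⬝ᵥ (Γt *ᵥ y) = G/2 * (∑ i, y i)^2 := by
    intro y
    have hT : Γt + Γtᵀ = Γ := by
      ext i j
      rw [Matrix.add_apply, Matrix.transpose_apply, hΓ, hΓt, hΓt]
      rcases lt_trichotomy i j with h | h | h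
      · simp [h, h.not_gt, h.ne]
      · simp [h]
      · simp [h, h.not_gt, h.ne]
    have h1 : y ⬝ᵥ (Γtᵀ *ᵥ y) = y ⬝ᵥ (Γt *ᵥ y) := by
      rw [Matrix.mulVec_transpose, dotProduct_comm, ← Matrix.dotProduct_mulVec]
    have h2 : y ⬝ᵥ (Γ *ᵥ y) = G * (∑ i, y i)^2 := by
      have : Γ *ᵥ y = fun _ => G * ∑ i, y i := by
        ext i; simp [Matrix.mulVec, dotProduct, hΓ, Finset.mul_sum]
      rw [this]
      simp only [dotProduct]
      rw [← Finset.sum_mul]; ring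
    rw [← hT, Matrix.add_mulVec, dotProduct_add, h1] at h2
    linarith
  have hpos : ∀ y : Fin (N+1) → ℝ, y ≠ 0 → 0 < y ⬝ᵥ y := by
    intro y hy
    have h0 : 0 ≤ y ⬝ᵥ y := Finset.sum_nonneg fun i _ => mul_self_nonneg (y i)
    exact lt_of_le_of_ne h0 fun h => hy (dotProduct_self_eq_zero.mp h.symm)
  have hsum : ∑ j : Fin (N+1), a^j.val = lam * (1 - a^(N+1)) := by
    rw [← aux_sum_fin a lam hl0.ne' ha (N+1) (N+1) le_rfl]
    exact Finset.sum_congr rfl fun j _ => by rw [if_pos j.isLt]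
  have hrev : ∀ j : Fin (N+1), (Fin.rev j).val = N - j.val := by
    intro j; rw [Fin.val_rev]; omega
  have hsum' : ∑ j : Fin (N+1), a^(N - j.val) = lam * (1 - a^(N+1)) := by
    rw [← hsum, ← Equiv.sum_comp Fin.revPerm (fun j : Fin (N+1) => a^j.val)]
    exact Finset.sum_congr rfl fun j _ => by rw [Fin.revPerm_apply, hrev]
  intro n
  constructor
  · rw [hv]
    refine aux_solve (Γθ + Γt) e (fun j => a^j.val) (G * (lam * (1 - a^(N+1)) + lam)) _ ?_ ?_ ?_ ?_ n
    · intro y hy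
      rw [Matrix.add_mulVec, dotProduct_add, hq1, hq2]
      have := hpos y hy
      positivity
    · ext i
      have hent : ∀ j : Fin (N+1), (Γθ + Γt) i j * a^j.val
          = G * a^j.val + G * (if j.val < i.val then a^j.val else 0)
            + (if i = j then G * lam * a^j.val else 0) := by
        intro j
        rw [Matrix.add_apply, hΓθ, Matrix.add_apply, Matrix.smul_apply, hΓ, hΓt, Matrix.one_apply,
          hGl, smul_eq_mul]
        rcases lt_trichotomy i j with h | h | h
        · simp [h.not_gt, h.ne]
        · simp [h]; ring
        · simp [h, h.ne']; ring
      simp only [Matrix.mulVec, dotProduct, hent, Finset.sum_add_distrib, ← Finset.mul_sum]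
      rw [hsum, aux_sum_fin a lam hl0.ne' ha (N+1) i.val i.isLt.le]
      simp [he]; ring
    · have : 0 < 1 - a^(N+1) := by linarith
      positivity
    · rw [he]; simpa [dotProduct] using hsum
  · rw [hw]
    refine aux_solve (Γθ - Γt) e (fun j => a^(N - j.val)) (G * lam) _ ?_ ?_ ?_ ?_ n
    · intro y hy
      rw [Matrix.sub_mulVec, dotProduct_sub, hq1, hq2]
      have := hpos y hy
      have h3 : 0 < G/2 * (∑ i, y i)^2 + 2*θ*(y ⬝ᵥ y) := by positivity
      intro h
      linarith
    · ext i
      have hent : ∀ j : Fin (N+1), (Γθ - Γt) i j * a^(N - j.val)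
          = G * (if (Fin.rev j).val < (Fin.rev i).val then a^(Fin.rev j).val else 0)
            + (if i = j then G * lam * a^(N - j.val) else 0) := by
        intro j
        rw [Matrix.sub_apply, hΓθ, Matrix.add_apply, Matrix.smul_apply, hΓ, hΓt, Matrix.one_apply,
          hGl, smul_eq_mul, hrev j]
        have hlt : (N - j.val < (Fin.rev i).val) ↔ i < j := by
          rw [hrev, Fin.lt_def]; omega
        simp only [hlt]
        rcases lt_trichotomy i j with h | h | h
        · simp [h, h.not_gt, h.ne]
        · simp [h]; left; ring
        · simp [h, h.ne', h.not_gt]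
      simp only [Matrix.mulVec, dotProduct, hent, Finset.sum_add_distrib, ← Finset.mul_sum]
      have h5 := Equiv.sum_comp Fin.revPerm
        (fun j : Fin (N+1) => if j.val < (Fin.rev i).val then a^j.val else 0)
      simp only [Fin.revPerm_apply] at h5
      rw [h5, aux_sum_fin a lam hl0.ne' ha (N+1) _ (Fin.rev i).isLt.le, hrev]
      simp [he]; ring
    · positivity
    · rw [he]; simpa [dotProduct] using hsum'
end

section
/- Let X ∈ ℝ and define the Nash-equilibrium strategies of the directional trader and the arbitrageur by ξ = (X/2)(v + w) and η = (X/2)(v − w). Then ξ is time-symmetric and η is time-antisymmetric: ξ_k = ξ_{N+2−k} and η_k = −η_{N+2−k} for every k = 1, 2, …, N+1. -/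
open Matrix

lemma aux_unit {n : ℕ} (M : Matrix (Fin n) (Fin n) ℝ) (c t : ℝ) (hc : 0 ≤ c) (ht : 0 < t)
    (h : ∀ i j, M i j + M j i = c + if i = j then t else 0) : IsUnit M.det := by
  rw [isUnit_iff_ne_zero]
  intro h0
  obtain ⟨x, hx, hMx⟩ := Matrix.exists_mulVec_eq_zero_iff.mpr h0
  have h1 : ∑ i, ∑ j, x i * M i j * x j = 0 := by
    have : x ⬝ᵥ (M *ᵥ x) = 0 := by rw [hMx]; simp
    rw [← this]
    simp only [dotProduct, mulVec, Finset.mul_sum, mul_assoc]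
  have h2 : ∑ i, ∑ j, x i * M j i * x j = 0 := by
    rw [Finset.sum_comm, ← h1]
    refine Finset.sum_congr rfl fun i _ => Finset.sum_congr rfl fun j _ => by ring
  have h3 : ∑ i, ∑ j, (x i * M i j * x j + x i * M j i * x j)
      = c * (∑ i, x i) ^ 2 + t * ∑ i, x i ^ 2 := by
    have : ∀ i j, x i * M i j * x j + x i * M j i * x j
        = c * (x i * x j) + if i = j then t * (x i * x j) else 0 := by
      intro i j
      have := h i j
      split_ifs at this ⊢ <;> linear_combination (x i * x j) * this
    simp only [this, Finset.sum_add_distrib, Finset.sum_ite_eq, Finset.mem_univ, if_true]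
    rw [sq, Finset.sum_mul_sum, Finset.mul_sum, Finset.mul_sum]
    simp only [Finset.mul_sum, sq]
  simp only [Finset.sum_add_distrib, h1, h2] at h3
  have h4 : 0 < ∑ i, x i ^ 2 := by
    obtain ⟨i, hi⟩ := Function.ne_iff.mp hx
    exact Finset.sum_pos' (fun i _ => sq_nonneg _) ⟨i, Finset.mem_univ _, by
      have : x i ≠ 0 := hi
      positivity⟩
  have : 0 < t * ∑ i, x i ^ 2 := mul_pos ht h4
  have : 0 ≤ c * (∑ i, x i) ^ 2 := by positivity
  linarith

/-- With `ξ = (X/2)(v + w)` and `η = (X/2)(v − w)` the Nash-equilibrium strategies of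
the directional trader and the arbitrageur, `ξ` is time-symmetric and `η` is
time-antisymmetric: `ξ_k = ξ_{N+2−k}` and `η_k = −η_{N+2−k}` for `k = 1,…,N+1`. -/
theorem stmt_6 (N : ℕ) (hN : 1 ≤ N) (G θ X : ℝ) (hG : 0 < G) (hθ : 0 < θ)
    (Γ Γθ Γt : Matrix (Fin (N+1)) (Fin (N+1)) ℝ)
    (hΓ : ∀ i j : Fin (N+1), Γ i j = G)
    (hΓθ : Γθ = Γ + (2*θ) • (1 : Matrix (Fin (N+1)) (Fin (N+1)) ℝ))
    (hΓt : ∀ i j : Fin (N+1), Γt i j = if j < i then G else if i = j then G/2 else 0)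
    (e : Fin (N+1) → ℝ) (he : e = fun _ => 1)
    (v w : Fin (N+1) → ℝ)
    (hv : v = (e ⬝ᵥ ((Γθ + Γt)⁻¹ *ᵥ e))⁻¹ • ((Γθ + Γt)⁻¹ *ᵥ e))
    (hw : w = (e ⬝ᵥ ((Γθ - Γt)⁻¹ *ᵥ e))⁻¹ • ((Γθ - Γt)⁻¹ *ᵥ e))
    (ξ η : Fin (N+1) → ℝ)
    (hξ : ξ = (X/2) • (v + w))
    (hη : η = (X/2) • (v - w)) :
    ∀ k : Fin (N+1), ξ k = ξ k.rev ∧ η k = -η k.rev := by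
  set B := Γθ + Γt with hB
  set C := Γθ - Γt with hC
  have eB : ∀ i j, B i j = G + (if i = j then 2 * θ else 0)
      + if j < i then G else if i = j then G/2 else 0 := by
    intro i j
    simp [hB, hΓθ, hΓ, hΓt, Matrix.one_apply]
  have eC : ∀ i j, C i j = G + (if i = j then 2 * θ else 0)
      - if j < i then G else if i = j then G/2 else 0 := by
    intro i j
    simp [hC, hΓθ, hΓ, hΓt, Matrix.one_apply]
  have tri : ∀ i j : Fin (N+1), (j < i ∧ ¬ i < j ∧ i ≠ j ∧ j ≠ i) ∨
      (i < j ∧ ¬ j < i ∧ i ≠ j ∧ j ≠ i) ∨ i = j := by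
    intro i j
    rcases lt_trichotomy i j with h | h | h
    · exact Or.inr (Or.inl ⟨h, h.asymm, h.ne, h.ne'⟩)
    · exact Or.inr (Or.inr h)
    · exact Or.inl ⟨h, h.asymm, h.ne', h.ne⟩
  have uB : IsUnit B.det := by
    refine aux_unit B (3 * G) (4 * θ) (by positivity) (by positivity) fun i j => ?_
    rw [eB, eB]
    rcases tri i j with ⟨h1, h2, h3, h4⟩ | ⟨h1, h2, h3, h4⟩ | rfl
    · simp [h1, h2, h3, h4]; ring
    · simp [h1, h2, h3, h4]; ring
    · simp; ring
  have uC : IsUnit C.det := by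
    refine aux_unit C G (4 * θ) (by positivity) (by positivity) fun i j => ?_
    rw [eC, eC]
    rcases tri i j with ⟨h1, h2, h3, h4⟩ | ⟨h1, h2, h3, h4⟩ | rfl
    · simp [h1, h2, h3, h4]
    · simp [h1, h2, h3, h4]
    · simp; ring
  set y := C⁻¹ *ᵥ e with hy
  set s := e ⬝ᵥ y with hs
  have hs' : s = ∑ i, y i := by simp [hs, he, dotProduct]
  have hCy : C *ᵥ y = e := by
    rw [hy, Matrix.mulVec_mulVec, Matrix.mul_nonsing_inv _ uC, Matrix.one_mulVec]
  have hBC : ∀ i j : Fin (N+1), B i j.rev = G + C i.rev j := by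
    intro i j
    rw [eB, eC]
    have a1 : (j.rev < i) ↔ (i.rev < j) := by
      rw [← Fin.rev_lt_rev, Fin.rev_rev]
    have a2 : (i = j.rev) ↔ (i.rev = j) := by
      constructor
      · rintro rfl; simp
      · rintro rfl; simp
    simp only [a1, a2]
    rcases tri i.rev j with ⟨h1, h2, h3, h4⟩ | ⟨h1, h2, h3, h4⟩ | h
    · simp [h1, h2, h3, h4]
    · simp [h1, h2, h3, h4]
    · simp [h]; ring
  have hBu : B *ᵥ (fun i => y i.rev) = (1 + G * s) • e := by
    funext i
    have h1 : (C *ᵥ y) i.rev = 1 := by rw [hCy, he]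
    simp only [mulVec, dotProduct] at h1 ⊢
    rw [← Equiv.sum_comp Fin.revPerm]
    simp only [Fin.revPerm_apply, Fin.rev_rev, hBC, add_mul, Finset.sum_add_distrib, h1,
      ← Finset.mul_sum, ← hs']
    simp [he]; ring
  have hu : (fun i => y i.rev) = (1 + G * s) • (B⁻¹ *ᵥ e) := by
    rw [← Matrix.mulVec_smul, ← hBu, Matrix.mulVec_mulVec, Matrix.nonsing_inv_mul _ uB,
      Matrix.one_mulVec]
  have hsu : s = e ⬝ᵥ (fun i => y i.rev) := by
    rw [hs', he]
    simp only [dotProduct, one_mul]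
    rw [← Equiv.sum_comp Fin.revPerm]
    simp
  have hne : 1 + G * s ≠ 0 := by
    intro h
    rw [h, zero_smul] at hu
    rw [hu] at hsu
    simp at hsu
    rw [hsu] at h
    simp at h
  have hvw : ∀ i, v i = w i.rev := by
    intro i
    have h1 : w i.rev = s⁻¹ * y i.rev := by rw [hw]; rfl
    have h2 : y i.rev = (1 + G * s) * (B⁻¹ *ᵥ e) i := congrFun hu i
    rw [h1, h2, hv]
    have h3 : s = (1 + G * s) * (e ⬝ᵥ (B⁻¹ *ᵥ e)) := by
      conv_lhs => rw [hsu, hu, dotProduct_smul, smul_eq_mul]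
    have h4 : s⁻¹ = (1 + G * s)⁻¹ * (e ⬝ᵥ (B⁻¹ *ᵥ e))⁻¹ := by
      conv_lhs => rw [h3, mul_inv]
    rw [h4]
    simp only [Pi.smul_apply, smul_eq_mul]
    field_simp
  intro k
  have h1 := hvw k
  have h2 := hvw k.rev
  rw [Fin.rev_rev] at h2
  subst hξ hη
  simp only [Pi.smul_apply, Pi.add_apply, Pi.sub_apply, smul_eq_mul, h1, h2]
  constructor <;> ring
end

section
/- Set λ = 2θ/G + 1/2 and a = 1 − 1/λ. Then the directional trader's Nash-equilibrium schedule ξ = (X/2)(v + w) has components ξ_k = (X/2)·(a^{k−1} + a^{N+1−k}) / (λ(1 − a^{N+1})) for every k = 1, 2, …, N+1 (with the convention a⁰ = 1). -/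
open Matrix

theorem aux_range (G lam a : ℝ) (h : lam * (1 - a) = 1) (i n : ℕ) :
    ∑ j ∈ Finset.range n, (if j < i then G else if i = j then G * lam else 0) * a ^ j
      = if n ≤ i then G * lam * (1 - a ^ n) else G * lam := by
  induction n with
  | zero => simp
  | succ n ih =>
    rw [Finset.sum_range_succ, ih]
    rcases lt_trichotomy n i with h1 | h1 | h1
    · rw [if_pos h1.le, if_pos h1, if_pos (Nat.succ_le_of_lt h1), pow_succ]
      linear_combination (-G * a ^ n) * h
    · subst h1
      simp
      ring
    · rw [if_neg (by omega), if_neg (by omega), if_neg (by omega), if_neg (by omega)]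
      ring

theorem aux_fin (G lam a : ℝ) (h : lam * (1 - a) = 1) (N : ℕ) (i : Fin (N+1)) :
    ∑ j : Fin (N+1), (if j < i then G else if i = j then G * lam else 0) * a ^ (j : ℕ)
      = G * lam := by
  have h1 := aux_range G lam a h i (N+1)
  rw [if_neg (by omega), ← Fin.sum_univ_eq_sum_range
    (fun j => (if j < (i : ℕ) then G else if (i : ℕ) = j then G * lam else 0) * a ^ j)] at h1
  refine Eq.trans ?_ h1
  refine Finset.sum_congr rfl fun j _ => ?_
  simp only [Fin.lt_def, Fin.ext_iff]

theorem aux_fin_rev (G lam a : ℝ) (h : lam * (1 - a) = 1) (N : ℕ) (i : Fin (N+1)) :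
    ∑ j : Fin (N+1), (if i < j then G else if i = j then G * lam else 0) * a ^ (N - (j : ℕ))
      = G * lam := by
  refine Eq.trans ?_ (aux_fin G lam a h N (Fin.rev i))
  rw [← Equiv.sum_comp Fin.revPerm]
  refine Finset.sum_congr rfl fun j _ => ?_
  have e1 : (i < Fin.rev j) ↔ (j < Fin.rev i) := by
    simp only [Fin.lt_def, Fin.val_rev]; omega
  have e2 : (i = Fin.rev j) ↔ (Fin.rev i = j) := by
    simp only [Fin.ext_iff, Fin.val_rev]; omega
  have e3 : N - ((Fin.rev j : Fin (N+1)) : ℕ) = j := by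
    simp only [Fin.val_rev]; omega
  simp only [Fin.revPerm_apply, e1, e2, e3]

theorem aux_inv {n : ℕ} (M : Matrix (Fin n) (Fin n) ℝ) (c d : ℝ) (hc : 0 ≤ c) (hd : 0 < d)
    (hM : ∀ i j, M i j + M j i = c + d * (if i = j then 1 else 0)) (x : Fin n → ℝ)
    (hx : M *ᵥ x = 0) : x = 0 := by
  have h0 : ∑ i, ∑ j, x i * M i j * x j = 0 := by
    have : x ⬝ᵥ (M *ᵥ x) = 0 := by rw [hx]; simp
    rw [← this]
    simp only [dotProduct, mulVec, Finset.mul_sum, mul_assoc]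
  have h0' : ∑ i, ∑ j, x i * M j i * x j = 0 := by
    rw [Finset.sum_comm, ← h0]
    refine Finset.sum_congr rfl fun i _ => Finset.sum_congr rfl fun j _ => by ring
  have h1 : c * (∑ i, x i)^2 + d * ∑ i, x i ^ 2 = 0 := by
    have : ∑ i, ∑ j, x i * M i j * x j + ∑ i, ∑ j, x i * M j i * x j = 0 := by
      rw [h0, h0']; simp
    rw [← this, sq, Finset.sum_mul_sum, Finset.mul_sum, Finset.mul_sum,
      ← Finset.sum_add_distrib, ← Finset.sum_add_distrib]
    refine Finset.sum_congr rfl fun i _ => ?_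
    rw [← Finset.sum_add_distrib, Finset.mul_sum]
    have : d * x i ^ 2 = ∑ j, d * (if i = j then 1 else 0) * (x i * x j) := by
      simp [sq]
    rw [this, ← Finset.sum_add_distrib]
    refine Finset.sum_congr rfl fun j _ => ?_
    linear_combination (-(x i * x j)) * hM i j
  have h2 : ∑ i, x i ^ 2 = 0 := by
    have := Finset.sum_nonneg (s := Finset.univ) (fun i _ => sq_nonneg (x i))
    have h3 := mul_nonneg hc (sq_nonneg (∑ i, x i))
    nlinarith
  rw [Finset.sum_eq_zero_iff_of_nonneg (fun i _ => sq_nonneg (x i))] at h2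
  ext i
  simpa using h2 i (Finset.mem_univ i)

theorem aux_sol {n : ℕ} (M : Matrix (Fin n) (Fin n) ℝ) (c d : ℝ) (hc : 0 ≤ c) (hd : 0 < d)
    (hM : ∀ i j, M i j + M j i = c + d * (if i = j then 1 else 0)) (u e : Fin n → ℝ)
    (t : ℝ) (hu : u ≠ 0) (hMu : M *ᵥ u = t • e) :
    (e ⬝ᵥ (M⁻¹ *ᵥ e))⁻¹ • (M⁻¹ *ᵥ e) = (e ⬝ᵥ u)⁻¹ • u := by
  have ht : t ≠ 0 := by
    rintro rfl
    exact hu (aux_inv M c d hc hd hM u (by simpa using hMu))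
  have hdet : IsUnit M.det := by
    rw [isUnit_iff_ne_zero]
    intro h
    obtain ⟨x, hx, hx'⟩ := Matrix.exists_mulVec_eq_zero_iff.mpr h
    exact hx (aux_inv M c d hc hd hM x hx')
  have h1 : M⁻¹ *ᵥ e = t⁻¹ • u := by
    have : u = t • (M⁻¹ *ᵥ e) := by
      rw [← mulVec_smul, ← hMu, mulVec_mulVec, nonsing_inv_mul _ hdet, one_mulVec]
    rw [this, smul_smul, inv_mul_cancel₀ ht, one_smul]
  rw [h1, dotProduct_smul, smul_smul, smul_eq_mul, mul_inv, inv_inv]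
  congr 1
  field_simp

/-- With `λ = 2θ/G + 1/2` and `a = 1 − 1/λ`, the directional trader's Nash-equilibrium
schedule `ξ = (X/2)(v + w)` has components
`ξ_k = (X/2)·(a^{k−1} + a^{N+1−k})/(λ(1 − a^{N+1}))` for `k = 1,…,N+1`. -/
theorem stmt_7 (N : ℕ) (hN : 1 ≤ N) (G θ X : ℝ) (hG : 0 < G) (hθ : 0 < θ)
    (lam a : ℝ) (hlam : lam = 2*θ/G + 1/2) (ha : a = 1 - 1/lam)
    (Γ Γθ Γt : Matrix (Fin (N+1)) (Fin (N+1)) ℝ)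
    (hΓ : ∀ i j : Fin (N+1), Γ i j = G)
    (hΓθ : Γθ = Γ + (2*θ) • (1 : Matrix (Fin (N+1)) (Fin (N+1)) ℝ))
    (hΓt : ∀ i j : Fin (N+1), Γt i j = if j < i then G else if i = j then G/2 else 0)
    (e : Fin (N+1) → ℝ) (he : e = fun _ => 1)
    (v w : Fin (N+1) → ℝ)
    (hv : v = (e ⬝ᵥ ((Γθ + Γt)⁻¹ *ᵥ e))⁻¹ • ((Γθ + Γt)⁻¹ *ᵥ e))
    (hw : w = (e ⬝ᵥ ((Γθ - Γt)⁻¹ *ᵥ e))⁻¹ • ((Γθ - Γt)⁻¹ *ᵥ e))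
    (ξ : Fin (N+1) → ℝ) (hξ : ξ = (X/2) • (v + w)) :
    ∀ k : Fin (N+1),
      ξ k = (X/2) * (a^(k.val) + a^(N - k.val)) / (lam * (1 - a^(N+1))) := by
  have hlp : 0 < lam := by rw [hlam]; positivity
  have h : lam * (1 - a) = 1 := by rw [ha]; field_simp; ring
  have hGl : G * lam = 2 * θ + G / 2 := by rw [hlam]; field_simp
  have hS : ∑ j : Fin (N+1), a ^ (j : ℕ) = lam * (1 - a ^ (N+1)) := by
    rw [Fin.sum_univ_eq_sum_range (fun j => a ^ j)]
    have := geom_sum_mul a (N+1)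
    linear_combination (-lam) * this - (∑ j ∈ Finset.range (N+1), a ^ j) * h
  have hS' : ∑ j : Fin (N+1), a ^ (N - (j : ℕ)) = lam * (1 - a ^ (N+1)) := by
    rw [← hS, ← Equiv.sum_comp Fin.revPerm]
    refine Finset.sum_congr rfl fun j _ => ?_
    congr 1
    simp only [Fin.revPerm_apply, Fin.val_rev]; omega
  have hv' := aux_sol (Γθ + Γt) (3 * G) (4 * θ) (by positivity) (by positivity)
    (by
      intro i j
      simp only [hΓθ, Matrix.add_apply, Matrix.smul_apply, hΓ, hΓt, Matrix.one_apply, smul_eq_mul]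
      rcases lt_trichotomy i j with h1 | h1 | h1
      · simp [h1, h1.ne, h1.ne', h1.not_gt]; ring
      · subst h1; simp; ring
      · simp [h1, h1.ne, h1.ne', h1.not_gt]; ring)
    (fun j => a ^ (j : ℕ)) e (G * ∑ j : Fin (N+1), a ^ (j : ℕ) + G * lam)
    (by intro h0; simpa using congrFun h0 0)
    (by
      ext i
      have h2 := aux_fin G lam a h N i
      simp only [he, Pi.smul_apply, smul_eq_mul, mul_one, mulVec, dotProduct]
      rw [← h2, Finset.mul_sum, ← Finset.sum_add_distrib]
      refine Finset.sum_congr rfl fun j _ => ?_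
      simp only [hΓθ, Matrix.add_apply, Matrix.smul_apply, hΓ, hΓt, Matrix.one_apply, smul_eq_mul,
        hGl]
      rcases lt_trichotomy i j with h1 | h1 | h1
      · simp [h1.ne, h1.not_gt]
      · subst h1; simp; ring
      · simp [h1, h1.ne']; ring)
  have hw' := aux_sol (Γθ - Γt) G (4 * θ) (by positivity) (by positivity)
    (by
      intro i j
      simp only [hΓθ, Matrix.sub_apply, Matrix.add_apply, Matrix.smul_apply, hΓ, hΓt,
        Matrix.one_apply, smul_eq_mul]
      rcases lt_trichotomy i j with h1 | h1 | h1
      · simp [h1, h1.ne, h1.ne', h1.not_gt]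
      · subst h1; simp; ring
      · simp [h1, h1.ne, h1.ne', h1.not_gt])
    (fun j => a ^ (N - (j : ℕ))) e (G * lam)
    (by intro h0; simpa using congrFun h0 (Fin.last N))
    (by
      ext i
      have h2 := aux_fin_rev G lam a h N i
      simp only [he, Pi.smul_apply, smul_eq_mul, mul_one, mulVec, dotProduct]
      rw [← h2]
      refine Finset.sum_congr rfl fun j _ => ?_
      simp only [hΓθ, Matrix.sub_apply, Matrix.add_apply, Matrix.smul_apply, hΓ, hΓt,
        Matrix.one_apply, smul_eq_mul, hGl]
      rcases lt_trichotomy i j with h1 | h1 | h1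
      · simp [h1, h1.ne, h1.not_gt]
      · subst h1; simp; left; ring
      · simp [h1, h1.ne', h1.not_gt])
  intro k
  have e1 : e ⬝ᵥ (fun j : Fin (N+1) => a ^ (j : ℕ)) = lam * (1 - a ^ (N+1)) := by
    rw [← hS, he]; simp [dotProduct]
  have e2 : e ⬝ᵥ (fun j : Fin (N+1) => a ^ (N - (j : ℕ))) = lam * (1 - a ^ (N+1)) := by
    rw [← hS', he]; simp [dotProduct]
  rw [hξ, hv, hw, hv', hw', e1, e2]
  simp only [Pi.smul_apply, Pi.add_apply, smul_eq_mul]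
  rw [div_eq_mul_inv _ (lam * (1 - a ^ (N+1)))]
  ring
end

section
/- If θ > G/4 and X > 0, then the directional trader's Nash-equilibrium schedule ξ has a U-shape: (i) ξ_k = ξ_{N+2−k} for all k = 1,…,N+1 (time symmetry); (ii) ξ_k > 0 for all k (positivity); (iii) ξ_k > ξ_{k+1} for every integer k with 1 ≤ k < (N+1)/2 (strict decrease in the first ⌊(N+1)/2⌋ components); and (iv) ξ_{k−1} − 2ξ_k + ξ_{k+1} > 0 for every integer k with 2 ≤ k ≤ N (strict convexity). -/
/-- If `θ > G/4` and `X > 0`, the directional trader's Nash-equilibrium schedule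
`ξ_k = (X/2)(a^{k−1} + a^{N+1−k})/(λ(1−a^{N+1}))` (1-based, `k = 1,…,N+1`) has a
U-shape: time symmetry, positivity, strict decrease for `1 ≤ k < (N+1)/2`, and strict
convexity `ξ_{k−1} − 2ξ_k + ξ_{k+1} > 0` for `2 ≤ k ≤ N`. -/
theorem stmt_8 (N : ℕ) (hN : 1 ≤ N) (G θ X : ℝ) (hG : 0 < G) (hθ : G/4 < θ) (hX : 0 < X)
    (lam a : ℝ) (hlam : lam = 2*θ/G + 1/2) (ha : a = 1 - 1/lam)
    (ξ : ℕ → ℝ)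
    (hξ : ∀ k : ℕ, ξ k = (X/2) * (a^(k-1) + a^(N+1-k)) / (lam * (1 - a^(N+1)))) :
    (∀ k : ℕ, 1 ≤ k → k ≤ N+1 → ξ k = ξ (N+2-k)) ∧
    (∀ k : ℕ, 1 ≤ k → k ≤ N+1 → 0 < ξ k) ∧
    (∀ k : ℕ, 1 ≤ k → 2*k < N+1 → ξ (k+1) < ξ k) ∧
    (∀ k : ℕ, 2 ≤ k → k ≤ N → 0 < ξ (k-1) - 2*ξ k + ξ (k+1)) := by
  have hl : 1 < lam := by
    rw [hlam]
    have : 1/2 < 2*θ/G := by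
      rw [lt_div_iff₀ hG]; linarith
    linarith
  have hl0 : 0 < lam := by linarith
  have h1 : 0 < 1/lam := by positivity
  have h2 : 1/lam < 1 := by rw [div_lt_one hl0]; exact hl
  have ha0 : 0 < a := by linarith
  have ha1 : a < 1 := by linarith
  have hp : a^(N+1) < 1 := pow_lt_one₀ ha0.le ha1 (by omega)
  have hd : 0 < lam * (1 - a^(N+1)) := mul_pos hl0 (by linarith)
  obtain ⟨c, hc, hξ'⟩ : ∃ c : ℝ, 0 < c ∧ ∀ k : ℕ, ξ k = c * (a^(k-1) + a^(N+1-k)) :=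
    ⟨(X/2) / (lam * (1 - a^(N+1))), by positivity, fun k => by rw [hξ k]; ring⟩
  refine ⟨?_, ?_, ?_, ?_⟩
  · intro k hk1 hk2
    rw [hξ', hξ', show N+2-k-1 = N+1-k by omega, show N+1-(N+2-k) = k-1 by omega, add_comm]
  · intro k _ _
    rw [hξ']; positivity
  · intro k hk1 hk2
    obtain ⟨j, rfl⟩ := Nat.exists_eq_add_of_le' hk1
    obtain ⟨m, rfl⟩ : ∃ m, N = j + 1 + m := ⟨N - (j+1), by omega⟩
    have hjm : a^m < a^j := pow_lt_pow_right_of_lt_one₀ ha0 ha1 (by omega)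
    rw [hξ', hξ', show j+1+1-1 = j+1 by omega, show j+1-1 = j by omega,
      show j+1+m+1-(j+1+1) = m by omega, show j+1+m+1-(j+1) = m+1 by omega]
    apply mul_lt_mul_of_pos_left _ hc
    rw [pow_succ, pow_succ]
    nlinarith [mul_pos (sub_pos.2 ha1) (sub_pos.2 hjm)]
  · intro k hk1 hk2
    obtain ⟨j, rfl⟩ := Nat.exists_eq_add_of_le' hk1
    obtain ⟨m, rfl⟩ : ∃ m, N = j + 2 + m := ⟨N - (j+2), by omega⟩
    rw [hξ', hξ', hξ', show j+2-1-1 = j by omega, show j+2-1 = j+1 by omega,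
      show j+2+1-1 = j+2 by omega, show j+2+m+1-(j+1) = m+2 by omega,
      show j+2+m+1-(j+2) = m+1 by omega, show j+2+m+1-(j+2+1) = m by omega]
    have h1a : 0 < 1 - a := by linarith
    have : 0 < c * ((1-a)^2 * (a^j + a^m)) := by positivity
    calc 0 < _ := this
      _ = _ := by ring
end

section
/- Suppose ξ ∈ ℝ^{N+1} has a U-shape, i.e. ξ_k = ξ_{N+2−k} for all k = 1,…,N+1, ξ_k > 0 for all k, ξ_k > ξ_{k+1} for every integer k with 1 ≤ k < (N+1)/2, and ξ_{k−1} − 2ξ_k + ξ_{k+1} > 0 for 2 ≤ k ≤ N. Let H be the (N+1)×(N+1) matrix with entries H_{i,m} = Σ_{j=1}^{N+1} 1_{{|i−j| = m−1}}·ξ_j, so that for every g ∈ ℝ^{N+1} and the symmetric Toeplitz matrix Π with Π_{ij} = g_{|i−j|+1} one has Π·ξ = H·g. Then the rank of H equals (N+1)/2 if N+1 is even and N/2 + 1 if N+1 is odd (i.e. rank H = ⌈(N+1)/2⌉), and the linear system H·g = e (where e = (1,…,1)ᵀ) has infinitely many solutions g ∈ ℝ^{N+1}. -/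
open Matrix

/-- If `ξ ∈ ℝ^{N+1}` has a U-shape (time-symmetric, positive, strictly decreasing in the
first half, strictly convex) and `H` is the matrix with `H_{i,m} = Σ_j 1_{|i−j|=m−1}·ξ_j`,
so that `Toep(g)·ξ = H·g` for every `g`, then `rank H = ⌈(N+1)/2⌉` (i.e. `(N+1)/2` if
`N+1` is even and `N/2+1` if `N+1` is odd) and the system `H·g = e` has infinitely many
solutions. (Indices are 0-based: entry `k` of the statement corresponds to `k−1` here.) -/
theorem stmt_10 (N : ℕ) (hN : 2 ≤ N)
    (ξ : Fin (N+1) → ℝ)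
    (hsym : ∀ i : Fin (N+1), ξ i = ξ i.rev)
    (hpos : ∀ i : Fin (N+1), 0 < ξ i)
    (hdec : ∀ k : ℕ, ∀ hk : 2*(k+1) < N+1,
      ξ ⟨k+1, by omega⟩ < ξ ⟨k, by omega⟩)
    (hconv : ∀ m : ℕ, ∀ hm : m + 2 ≤ N,
      0 < ξ ⟨m, by omega⟩ - 2 * ξ ⟨m+1, by omega⟩ + ξ ⟨m+2, by omega⟩)
    (H : Matrix (Fin (N+1)) (Fin (N+1)) ℝ)
    (hH : ∀ i m : Fin (N+1), H i m =
      ∑ j : Fin (N+1), if Nat.dist i.val j.val = m.val then ξ j else 0) :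
    (∀ g : Fin (N+1) → ℝ,
      (Matrix.of fun i j : Fin (N+1) =>
        g ⟨Nat.dist i.val j.val, by
          have hi := i.isLt; have hj := j.isLt; simp [Nat.dist]; omega⟩) *ᵥ ξ
      = H *ᵥ g) ∧
    H.rank = (N+2)/2 ∧
    {g : Fin (N+1) → ℝ | H *ᵥ g = fun _ => 1}.Infinite := by
  have hrow : ∀ i m : Fin (N+1), H i.rev m = H i m := by
    intro i m
    rw [hH, hH, ← Equiv.sum_comp Fin.revPerm]
    refine Finset.sum_congr rfl fun j _ => ?_
    have h1 : Nat.dist (i.rev).val (Fin.revPerm j).val = Nat.dist i.val j.val := by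
      have hi := i.isLt
      have hj := j.isLt
      simp only [Fin.revPerm_apply, Fin.val_rev, Nat.dist]
      omega
    have h2 : ξ (Fin.revPerm j) = ξ j := by
      rw [Fin.revPerm_apply]; exact (hsym j).symm
    rw [h1, h2]
  obtain ⟨M, hM⟩ : ∃ M, M = (N+2)/2 := ⟨_, rfl⟩
  let r : Fin M → Fin (N+1) := fun a => ⟨a.val, by have := a.isLt; omega⟩
  let c : Fin M → Fin (N+1) := fun k => ⟨N - k.val, by omega⟩
  let f : Fin (N+1) → Fin M := fun i => ⟨min i.val (N - i.val), by have := i.isLt; omega⟩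
  have hrf : ∀ i m, H (r (f i)) m = H i m := by
    intro i m
    by_cases h : i.val ≤ N - i.val
    · have : r (f i) = i := by
        apply Fin.ext
        simp only [r, f]
        omega
      rw [this]
    · have : r (f i) = i.rev := by
        apply Fin.ext
        simp only [r, f, Fin.val_rev]
        omega
      rw [this, hrow]
  let B : Matrix (Fin M) (Fin M) ℝ := H.submatrix r c
  have hBtri : B.BlockTriangular id := by
    intro a k hak
    have hak' : k.val < a.val := hak
    have ha := a.isLt
    simp only [B, Matrix.submatrix_apply, hH]
    refine Finset.sum_eq_zero fun j _ => if_neg ?_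
    have hj := j.isLt
    simp only [r, c, Nat.dist]
    omega
  have hBdiag : ∀ a, 0 < B a a := by
    intro a
    have ha := a.isLt
    simp only [B, Matrix.submatrix_apply, hH]
    refine Finset.sum_pos' (fun j _ => ?_) ⟨Fin.last N, Finset.mem_univ _, ?_⟩
    · split_ifs
      · exact (hpos j).le
      · exact le_rfl
    · rw [if_pos]
      · exact hpos _
      · simp only [r, c, Nat.dist, Fin.val_last]
        omega
  have hBdet : IsUnit B.det := by
    rw [Matrix.det_of_upperTriangular hBtri]
    exact (Finset.prod_pos fun a _ => hBdiag a).ne'.isUnit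
  let E : Matrix (Fin (N+1)) (Fin M) ℝ := (1 : Matrix _ _ ℝ).submatrix id c
  let P : Matrix (Fin (N+1)) (Fin M) ℝ := (1 : Matrix (Fin M) (Fin M) ℝ).submatrix f id
  let R : Matrix (Fin M) (Fin (N+1)) ℝ := (1 : Matrix (Fin (N+1)) (Fin (N+1)) ℝ).submatrix r id
  have hE : H * E = H.submatrix id c := by
    ext i k
    simp [E, Matrix.mul_apply, Matrix.one_apply]
  have hB : R * (H * E) = B := by
    rw [hE]
    ext i k
    simp [R, B, Matrix.mul_apply, Matrix.one_apply]
  have hP : P * H.submatrix r id = H := by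
    ext i m
    simp [P, Matrix.mul_apply, Matrix.one_apply, hrf]
  refine ⟨?_, ?_, ?_⟩
  · intro g
    ext i
    simp only [Matrix.mulVec, dotProduct, Matrix.of_apply, hH, Finset.sum_mul]
    rw [Finset.sum_comm]
    refine Finset.sum_congr rfl fun j _ => ?_
    have hi := i.isLt
    have hj := j.isLt
    have hd : Nat.dist i.val j.val < N + 1 := by simp only [Nat.dist]; omega
    rw [Finset.sum_eq_single (⟨Nat.dist i.val j.val, hd⟩ : Fin (N+1))]
    · rw [if_pos rfl, mul_comm]
    · intro m _ hm
      rw [if_neg, zero_mul]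
      intro h
      exact hm (Fin.ext h.symm)
    · intro h
      exact absurd (Finset.mem_univ _) h
  · rw [← hM]
    apply le_antisymm
    · rw [← hP]
      refine (Matrix.rank_mul_le_left _ _).trans ?_
      simpa using Matrix.rank_le_card_width P
    · have h1 : B.rank = M := by
        rw [Matrix.rank_of_isUnit B ((Matrix.isUnit_iff_isUnit_det B).2 hBdet), Fintype.card_fin]
      rw [← h1, ← hB]
      exact (Matrix.rank_mul_le_right _ _).trans (Matrix.rank_mul_le_left _ _)
  · have hdet : H.det = 0 := by
      refine Matrix.det_zero_of_row_eq (i := 0) (j := Fin.last N) ?_ ?_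
      · intro h
        have := congrArg Fin.val h
        simp at this
        omega
      · funext m
        rw [← hrow 0 m, Fin.rev_zero]
    obtain ⟨v, hv0, hv⟩ := Matrix.exists_mulVec_eq_zero_iff.2 hdet
    let y : Fin M → ℝ := B⁻¹ *ᵥ (fun _ => 1)
    have hy : B *ᵥ y = fun _ => 1 := by
      simp only [y, Matrix.mulVec_mulVec]
      rw [Matrix.mul_nonsing_inv _ hBdet, Matrix.one_mulVec]
    have hg : H *ᵥ (E *ᵥ y) = fun _ => 1 := by
      rw [Matrix.mulVec_mulVec, hE]
      funext i
      rw [← congrFun hy (f i)]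
      simp only [Matrix.mulVec, dotProduct, B, Matrix.submatrix_apply, hrf, id]
    refine Set.infinite_of_injective_forall_mem (f := fun t : ℝ => E *ᵥ y + t • v) ?_ ?_
    · intro s t hst
      have h := add_left_cancel hst
      exact smul_left_injective ℝ hv0 h
    · intro t
      simp only [Set.mem_setOf_eq]
      rw [Matrix.mulVec_add, Matrix.mulVec_smul, hv, hg, smul_zero, add_zero]
end

section
/- Set λ = 2θ/G + 1/2 and a = 1 − 1/λ (so a ∈ (0,1) since θ > G/4). Then for every integer k with 2 ≤ k ≤ ⌊N/2⌋ + 1, the components of the directional Nash-equilibrium schedule ξ satisfy ξ_{k−1} − ξ_k = ((1−a)²/(2a)) · (X − 2·Σ_{i=1}^{k−1} ξ_i); in particular the ratio (ξ_{k−1} − ξ_k)/(X − 2·Σ_{i=1}^{k−1} ξ_i) is the same constant (1−a)²/(2a) for all such k. -/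
/-- With `λ = 2θ/G + 1/2`, `a = 1 − 1/λ ∈ (0,1)` (since `θ > G/4`), for every
`2 ≤ k ≤ ⌊N/2⌋ + 1` the components of the directional Nash-equilibrium schedule satisfy
`ξ_{k−1} − ξ_k = ((1−a)²/(2a))·(X − 2·Σ_{i=1}^{k−1} ξ_i)`; in particular the ratio
`(ξ_{k−1} − ξ_k)/(X − 2·Σ_{i=1}^{k−1} ξ_i)` equals the constant `(1−a)²/(2a)`. -/
theorem stmt_11 (N : ℕ) (hN : 2 ≤ N) (G θ X : ℝ) (hG : 0 < G) (hθ : G/4 < θ) (hX : 0 < X)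
    (lam a : ℝ) (hlam : lam = 2*θ/G + 1/2) (ha : a = 1 - 1/lam)
    (ξ : ℕ → ℝ)
    (hξ : ∀ k : ℕ, ξ k = (X/2) * (a^(k-1) + a^(N+1-k)) / (lam * (1 - a^(N+1)))) :
    ∀ k : ℕ, 2 ≤ k → k ≤ N/2 + 1 →
      ξ (k-1) - ξ k = ((1-a)^2 / (2*a)) * (X - 2 * ∑ i ∈ Finset.Icc 1 (k-1), ξ i) := by
  have hlam1 : 1 < lam := by
    have h : 1/2 < 2*θ/G := by
      rw [lt_div_iff₀ hG]; linarith
    rw [hlam]; linarith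
  have hlam0 : lam ≠ 0 := by positivity
  have hinv : 1/lam < 1 := by
    rw [div_lt_one (by linarith)]; exact hlam1
  have hinv0 : 0 < 1/lam := by positivity
  have ha0 : 0 < a := by linarith
  have ha1 : a < 1 := by linarith
  have hpow : a^(N+1) < 1 := pow_lt_one₀ ha0.le ha1 (by omega)
  have hD : 1 - a^(N+1) ≠ 0 := by linarith
  have hξ' : ∀ k : ℕ, ξ k = (X/2) * (1-a) * (a^(k-1) + a^(N+1-k)) / (1 - a^(N+1)) := by
    intro k
    have h1 : 1 - a = 1/lam := by linarith
    rw [hξ k, h1]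
    field_simp
  have key : ∀ m : ℕ, m ≤ N → X - 2 * ∑ i ∈ Finset.Icc 1 m, ξ i
      = X * (a^m - a^(N+1-m)) / (1 - a^(N+1)) := by
    intro m
    induction m with
    | zero =>
      intro _
      simp
      field_simp
    | succ m ih =>
      intro hm
      have ih' := ih (by omega)
      rw [Finset.sum_Icc_succ_top (by omega), mul_add, ← sub_sub, ih', hξ' (m+1)]
      obtain ⟨p, rfl⟩ := Nat.exists_eq_add_of_le hm
      have e1 : m + 1 + p + 1 - m = p + 2 := by omega
      have e2 : m + 1 + p + 1 - (m+1) = p + 1 := by omega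
      rw [e1, e2, Nat.add_sub_cancel]
      field_simp
      ring
  intro k hk hkN
  rw [key (k-1) (by omega), hξ' (k-1), hξ' k]
  obtain ⟨j, rfl⟩ := Nat.exists_eq_add_of_le' hk
  obtain ⟨p, rfl⟩ := Nat.exists_eq_add_of_le (show j + 1 ≤ N by omega)
  have e1 : j + 1 + p + 1 - (j + 2 - 1) = p + 1 := by omega
  have e2 : j + 1 + p + 1 - (j + 2) = p := by omega
  have e3 : j + 2 - 1 - 1 = j := by omega
  have e4 : j + 2 - 1 = j + 1 := by omega
  rw [e1, e2, e3, e4]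
  field_simp
  ring
end

section
/- Suppose θ > G/4 and X > 0. Then X − 2ξ_1 ≠ 0, and setting β = −2θN·(ξ_1 − ξ_2)/(X − 2ξ_1), there exists α ∈ ℝ such that the symmetric Toeplitz matrix Π with entries Π_{ij} = 2θ·1_{{i=j}} + α + β·|i−j|/N satisfies Π·ξ = e, where e = (1,…,1)ᵀ ∈ ℝ^{N+1}. In other words, a linear implied transient impact function always exists for the directional Nash-equilibrium schedule. -/
open Matrix

lemma aux_F0 (a : ℝ) (i : ℕ) :
    (1-a)^2 * ∑ j ∈ Finset.range (i+1), (Nat.dist i j : ℝ) * a^j = i*(1-a) - a + a^(i+1) := by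
  induction i with
  | zero => simp [Nat.dist_self]
  | succ i ih =>
    rw [Finset.sum_range_succ]
    have h : ∑ j ∈ Finset.range (i+1), (Nat.dist (i+1) j : ℝ) * a^j
        = ∑ j ∈ Finset.range (i+1), (Nat.dist i j : ℝ) * a^j + ∑ j ∈ Finset.range (i+1), a^j := by
      rw [← Finset.sum_add_distrib]
      apply Finset.sum_congr rfl
      intro j hj
      have hj' := Finset.mem_range.1 hj
      have : Nat.dist (i+1) j = Nat.dist i j + 1 := by unfold Nat.dist; omega
      rw [this]; push_cast; ring
    have hg := mul_neg_geom_sum a (i+1)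
    rw [h, Nat.dist_self]
    push_cast
    linear_combination ih + (1-a) * hg

lemma aux_F (a : ℝ) (i m : ℕ) :
    (1-a)^2 * ∑ j ∈ Finset.range (i+m+1), (Nat.dist i j : ℝ) * a^j
      = i*(1-a) - a + 2*a^(i+1) - (m+1)*a^(i+m+1) + m*a^(i+m+2) := by
  induction m with
  | zero => rw [add_zero, aux_F0]; push_cast; ring
  | succ m ih =>
    rw [Finset.sum_range_succ, mul_add, ← add_assoc i m 1, ih]
    have : Nat.dist i (i+m+1) = m+1 := by unfold Nat.dist; omega
    rw [this]; push_cast; ring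

lemma aux_T (a : ℝ) (i m : ℕ) :
    (1-a)^2 * ∑ j ∈ Finset.range (i+m+1), (Nat.dist i j : ℝ) * (a^j + a^(i+m-j))
      = 2*a*(a^i+a^m) + ((i+m : ℕ)*(1-a) - 2*a - ((i+m : ℕ)+2)*a^(i+m+1)
        + (i+m : ℕ)*a^(i+m+2)) := by
  have h1 := aux_F a i m
  have h2 := aux_F a m i
  have h3 : ∑ j ∈ Finset.range (m+i+1), (Nat.dist m j : ℝ) * a^j
      = ∑ j ∈ Finset.range (i+m+1), (Nat.dist i j : ℝ) * a^(i+m-j) := by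
    rw [add_comm m i, ← Finset.sum_range_reflect]
    apply Finset.sum_congr rfl
    intro j hj
    have hj' := Finset.mem_range.1 hj
    have e : i+m+1-1-j = i+m-j := by omega
    have : Nat.dist m (i+m-j) = Nat.dist i j := by unfold Nat.dist; omega
    rw [e, this]
  rw [h3] at h2
  simp only [mul_add, Finset.sum_add_distrib] at *
  push_cast
  rw [add_comm m i] at h2
  linear_combination h1 + h2



/-- If `θ > G/4` and `X > 0`, then `X − 2ξ_1 ≠ 0`, and with
`β = −2θN(ξ_1 − ξ_2)/(X − 2ξ_1)` there exists `α ∈ ℝ` such that the symmetric Toeplitz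
matrix `Π` with `Π_{ij} = 2θ·1_{i=j} + α + β·|i−j|/N` satisfies `Π·ξ = e`: a linear
implied transient impact function always exists.  (Indices are 0-based, so `ξ_1 = ξ 0`,
`ξ_2 = ξ 1`.) -/
theorem stmt_12 (N : ℕ) (hN : 2 ≤ N) (G θ X : ℝ) (hG : 0 < G) (hθ : G/4 < θ) (hX : 0 < X)
    (lam a : ℝ) (hlam : lam = 2*θ/G + 1/2) (ha : a = 1 - 1/lam)
    (ξ : Fin (N+1) → ℝ)
    (hξ : ∀ k : Fin (N+1),
      ξ k = (X/2) * (a^(k.val) + a^(N - k.val)) / (lam * (1 - a^(N+1)))) :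
    X - 2 * ξ 0 ≠ 0 ∧
    ∃ α : ℝ,
      (Matrix.of fun i j : Fin (N+1) =>
          (if i = j then 2*θ else 0) + α +
            (-2*θ*N*(ξ 0 - ξ 1)/(X - 2*ξ 0)) * (Nat.dist i.val j.val) / N) *ᵥ ξ
        = fun _ => 1 := by

  have hl1 : 1 < lam := by
    rw [hlam]
    have : 1/2 < 2*θ/G := by rw [lt_div_iff₀ hG]; linarith
    linarith
  have hl0 : 0 < lam := by linarith
  have ha0 : 0 < a := by
    rw [ha]; have : 1/lam < 1 := by rw [div_lt_one hl0]; exact hl1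
    linarith
  have h1a : 0 < 1 - a := by
    rw [ha]; have : 0 < 1/lam := by positivity
    linarith
  have hla : lam * (1 - a) = 1 := by rw [ha]; field_simp; ring
  have hD : 0 < 1 - a^(N+1) := by
    have := pow_lt_one₀ ha0.le (by linarith : a < 1) (Nat.succ_ne_zero N)
    simpa using this
  obtain ⟨M, rfl⟩ : ∃ M, N = M + 2 := ⟨N - 2, by omega⟩
  have hM : 0 < 1 - a^(M+1) := by
    have := pow_lt_one₀ ha0.le (by linarith : a < 1) (Nat.succ_ne_zero M)
    simpa using this
  obtain ⟨c, hc⟩ : ∃ c, c = (X/2) / (lam * (1 - a^(M+2+1))) := ⟨_, rfl⟩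
  have hc0 : 0 < c := by rw [hc]; positivity
  have hX2 : X * (1-a) = 2 * c * (1 - a^(M+2+1)) := by
    have : c * (lam * (1 - a^(M+2+1))) = X/2 := by rw [hc]; field_simp
    linear_combination (-2*(1-a)) * this + 2*c*(1 - a^(M+2+1)) * hla
  have hξ' : ∀ k : Fin (M+2+1), ξ k = c * (a^(k.val) + a^(M+2-k.val)) := by
    intro k; rw [hξ, hc]; ring
  have h0 : ξ 0 = c * (1 + a^(M+2)) := by rw [hξ']; simp
  have h1 : ξ 1 = c * (a + a^(M+1)) := by rw [hξ']; simp
  have hXd : (X - 2 * ξ 0) * (1-a) = 2*c*a*(1-a^(M+1)) := by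
    rw [h0]; linear_combination hX2
  have hne : X - 2 * ξ 0 ≠ 0 := by
    intro h; rw [h, zero_mul] at hXd
    have : 0 < 2*c*a*(1-a^(M+1)) := by positivity
    linarith
  refine ⟨hne, ?_⟩
  have hN0 : ((M+2 : ℕ) : ℝ) ≠ 0 := by positivity
  have hb : -2*θ*(M+2 : ℕ)*(ξ 0 - ξ 1)/(X - 2*ξ 0) = (M+2 : ℕ) * (-θ*(1-a)^2/a) := by
    rw [div_eq_iff hne]
    field_simp
    rw [h1]
    have e : ξ 0 = c * (1 + a^(M+2)) := h0
    have : (1-a)^2*(X-2*ξ 0) = (1-a)*(2*c*a*(1-a^(M+1))) := by rw [← hXd]; ring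
    linear_combination θ * this - 2*θ*a*e
  rw [hb]
  have hsum : ∑ j, ξ j = X := by
    have : ∑ j : Fin (M+2+1), ξ j = ∑ j ∈ Finset.range (M+2+1), c * (a^j + a^(M+2-j)) := by
      rw [← Fin.sum_univ_eq_sum_range (fun j => c * (a^j + a^(M+2-j)))]
      exact Finset.sum_congr rfl (fun j _ => hξ' j)
    rw [this, ← Finset.mul_sum, Finset.sum_add_distrib]
    have hr := Finset.sum_range_reflect (fun j => a^j) (M+2+1)
    simp only [Nat.add_sub_cancel] at hr
    rw [hr]
    have hg := mul_neg_geom_sum a (M+2+1)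
    apply mul_right_cancel₀ h1a.ne'
    rw [hX2, ← hg]; ring
  obtain ⟨K, hK⟩ : ∃ K : ℝ, K = ((M+2 : ℕ)*(1-a) - 2*a - ((M+2 : ℕ)+2)*a^(M+2+1)
        + (M+2 : ℕ)*a^(M+2+2)) := ⟨_, rfl⟩
  refine ⟨(1 + θ*c*K/a)/X, ?_⟩
  funext i
  have hT := aux_T a i.val (M+2-i.val)
  have hi : i.val + (M+2-i.val) = M+2 := by have := i.isLt; omega
  rw [hi, ← hK] at hT
  have hS : (1-a)^2 * ∑ j : Fin (M+2+1), (Nat.dist i.val j.val : ℝ) * ξ j = 2*a*ξ i + c*K := by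
    have : ∑ j : Fin (M+2+1), (Nat.dist i.val j.val : ℝ) * ξ j
        = c * ∑ j ∈ Finset.range (M+2+1), (Nat.dist i.val j : ℝ) * (a^j + a^(M+2-j)) := by
      rw [← Fin.sum_univ_eq_sum_range
        (fun j => (Nat.dist i.val j : ℝ) * (a^j + a^(M+2-j))), Finset.mul_sum]
      exact Finset.sum_congr rfl (fun j _ => by rw [hξ' j]; ring)
    rw [this, hξ' i]
    linear_combination c * hT
  simp only [Matrix.mulVec, dotProduct, Matrix.of_apply]
  have hsplit : ∀ α B : ℝ, ∑ j : Fin (M+2+1), ((if i = j then 2*θ else 0) + α +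
      ((M+2 : ℕ) * B) * (Nat.dist i.val j.val) / (M+2 : ℕ)) * ξ j
      = 2*θ*ξ i + α * ∑ j, ξ j + B * ∑ j : Fin (M+2+1), (Nat.dist i.val j.val : ℝ) * ξ j := by
    intro α B
    have e : 2*θ*ξ i = ∑ j : Fin (M+2+1), (if i = j then 2*θ else 0) * ξ j := by simp
    rw [e, Finset.mul_sum, Finset.mul_sum, ← Finset.sum_add_distrib, ← Finset.sum_add_distrib]
    refine Finset.sum_congr rfl (fun j _ => ?_)
    rw [mul_assoc ((M+2 : ℕ) : ℝ), mul_div_cancel_left₀ _ hN0]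
    ring
  rw [hsplit, hsum, div_mul_cancel₀ _ hX.ne']
  have : -θ*(1-a)^2/a * ∑ j : Fin (M+2+1), (Nat.dist i.val j.val : ℝ) * ξ j
      = -θ/a * (2*a*ξ i + c*K) := by rw [← hS]; ring
  rw [this]
  field_simp
  ring
end

section
/- Suppose θ > G/4 and X > 0. Then X − 2ξ_1 ≠ 0 and the slope of the linear implied transient impact function satisfies −2θN·(ξ_1 − ξ_2)/(X − 2ξ_1) = −θN·(1−a)²/a = −4θN·G²/(16θ² − G²), which is strictly negative. -/
/-- If `θ > G/4` and `X > 0`, then `X − 2ξ_1 ≠ 0` and the slope of the linear implied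
transient impact function satisfies
`−2θN(ξ_1 − ξ_2)/(X − 2ξ_1) = −θN(1−a)²/a = −4θNG²/(16θ² − G²) < 0`. -/
theorem stmt_13 (N : ℕ) (hN : 2 ≤ N) (G θ X : ℝ) (hG : 0 < G) (hθ : G/4 < θ) (hX : 0 < X)
    (lam a : ℝ) (hlam : lam = 2*θ/G + 1/2) (ha : a = 1 - 1/lam)
    (ξ : ℕ → ℝ)
    (hξ : ∀ k : ℕ, ξ k = (X/2) * (a^(k-1) + a^(N+1-k)) / (lam * (1 - a^(N+1)))) :
    X - 2 * ξ 1 ≠ 0 ∧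
    -2*θ*N*(ξ 1 - ξ 2)/(X - 2*ξ 1) = -θ*N*(1-a)^2/a ∧
    -θ*N*(1-a)^2/a = -4*θ*N*G^2/(16*θ^2 - G^2) ∧
    -4*θ*N*G^2/(16*θ^2 - G^2) < 0 := by
  have hl1 : 1 < lam := by
    have h : 1 / 2 < 2 * θ / G := by
      rw [div_lt_div_iff₀ (by norm_num) hG]; linarith
    linarith
  have hl0 : 0 < lam := by linarith
  have hinv : 1 / lam < 1 := by rw [div_lt_one hl0]; exact hl1
  have hinv0 : 0 < 1 / lam := by positivity
  have ha0 : 0 < a := by linarith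
  have ha1 : a < 1 := by linarith
  have hθ0 : 0 < θ := by linarith
  have hq : 0 < 16 * θ ^ 2 - G ^ 2 := by nlinarith
  obtain ⟨m, rfl⟩ : ∃ m, N = m + 2 := ⟨N - 2, by omega⟩
  have hp1 : a ^ (m + 1) < 1 := pow_lt_one₀ ha0.le ha1 (by omega)
  have hD1 : a ^ (m + 2 + 1) < 1 := pow_lt_one₀ ha0.le ha1 (by omega)
  have hl : lam = 1 / (1 - a) := by
    rw [ha]; field_simp; ring
  have h1a : 1 - a ≠ 0 := by linarith
  have hD : 1 - a ^ (m + 2 + 1) ≠ 0 := by linarith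
  have e1 : ξ 1 = (X / 2) * (1 + a ^ (m + 2)) * (1 - a) / (1 - a ^ (m + 2 + 1)) := by
    rw [hξ 1, hl]
    simp only [Nat.sub_self, pow_zero, Nat.add_sub_cancel]
    field_simp
  have e2 : ξ 2 = (X / 2) * (a + a ^ (m + 1)) * (1 - a) / (1 - a ^ (m + 2 + 1)) := by
    rw [hξ 2, hl]
    have h1 : m + 2 + 1 - 2 = m + 1 := by omega
    rw [h1]
    norm_num
    field_simp
  have d1 : X - 2 * ξ 1 = X * a * (1 - a ^ (m + 1)) / (1 - a ^ (m + 2 + 1)) := by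
    rw [e1, eq_div_iff hD, sub_mul, mul_assoc 2, div_mul_cancel₀ _ hD]; ring
  have d2 : ξ 1 - ξ 2
      = (X / 2) * (1 - a) ^ 2 * (1 - a ^ (m + 1)) / (1 - a ^ (m + 2 + 1)) := by
    rw [e1, e2, ← sub_div]; congr 1; ring
  have hp : 1 - a ^ (m + 1) ≠ 0 := by linarith
  refine ⟨?_, ?_, ?_, ?_⟩
  · rw [d1]
    exact div_ne_zero (mul_ne_zero (mul_ne_zero hX.ne' ha0.ne') hp) hD
  · rw [d1, d2]
    generalize 1 - a ^ (m + 2 + 1) = D at *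
    generalize 1 - a ^ (m + 1) = P at *
    field_simp
  · have h4 : 4 * θ + G ≠ 0 := by positivity
    have hA : a = (4 * θ - G) / (4 * θ + G) := by
      rw [ha, hlam]
      have : 2 * θ / G + 1 / 2 = (4 * θ + G) / (2 * G) := by field_simp; ring
      rw [this]; field_simp; ring
    have h5 : 4 * θ - G ≠ 0 := by linarith
    have hB : 1 - a = 2 * G / (4 * θ + G) := by rw [hA]; field_simp; ring
    have hC : 16 * θ ^ 2 - G ^ 2 = (4 * θ - G) * (4 * θ + G) := by ring
    rw [hB, hA, hC]
    field_simp
    ring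
  · apply div_neg_of_neg_of_pos _ hq
    have : 0 < θ * ((m + 2 : ℕ) : ℝ) * G ^ 2 := by positivity
    linarith
end

section
/- For a fixed integer N ≥ 1, consider the absolute slope s(θ, G) = 4θN·G²/(16θ² − G²) of the linear implied transient impact function. Then: (i) for each fixed G > 0, the map θ ↦ s(θ, G) is strictly decreasing on the interval (G/4, ∞); and (ii) for each fixed θ > 0, the map G ↦ s(θ, G) is strictly increasing on the interval (0, 4θ). -/
/-- For fixed `N ≥ 1`, the absolute slope `s(θ,G) = 4θN·G²/(16θ² − G²)` of the linear
implied transient impact function is (i) strictly decreasing in `θ` on `(G/4, ∞)` for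
each fixed `G > 0`, and (ii) strictly increasing in `G` on `(0, 4θ)` for each fixed
`θ > 0`. -/
theorem stmt_14 (N : ℕ) (hN : 1 ≤ N) :
    (∀ G : ℝ, 0 < G →
      StrictAntiOn (fun θ : ℝ => 4*θ*N*G^2/(16*θ^2 - G^2)) (Set.Ioi (G/4))) ∧
    (∀ θ : ℝ, 0 < θ →
      StrictMonoOn (fun G : ℝ => 4*θ*N*G^2/(16*θ^2 - G^2)) (Set.Ioo 0 (4*θ))) := by
  have hN' : (0:ℝ) < N := by exact_mod_cast hN
  constructor
  · intro G hG a ha b hb hab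
    simp only [Set.mem_Ioi] at ha hb
    have ha0 : 0 < a := by linarith
    have hb0 : 0 < b := by linarith
    have h1 : 0 < 16*a^2 - G^2 := by nlinarith
    have h2 : 0 < 16*b^2 - G^2 := by nlinarith
    have hd : 0 < b - a := by linarith
    have key : 0 < 4*N*G^2*((b-a)*(16*a*b+G^2)) := by positivity
    show 4*b*N*G^2/(16*b^2 - G^2) < 4*a*N*G^2/(16*a^2 - G^2)
    rw [div_lt_div_iff₀ h2 h1]
    linarith
  · intro θ hθ a ha b hb hab
    obtain ⟨ha0, ha1⟩ := ha
    obtain ⟨hb0, hb1⟩ := hb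
    have h1 : 0 < 16*θ^2 - a^2 := by nlinarith
    have h2 : 0 < 16*θ^2 - b^2 := by nlinarith
    have hd : 0 < b - a := by linarith
    have key : 0 < 4*θ*N*(16*θ^2*((b-a)*(b+a))) := by positivity
    show 4*θ*N*a^2/(16*θ^2 - a^2) < 4*θ*N*b^2/(16*θ^2 - b^2)
    rw [div_lt_div_iff₀ h1 h2]
    linarith
end

section
/- Suppose θ = G/4. Then the fundamental solutions of the Schied–Zhang market impact game with constant kernel G are the standard basis vectors: v = (1, 0, …, 0)ᵀ and w = (0, …, 0, 1)ᵀ in ℝ^{N+1}; consequently the directional trader's Nash-equilibrium schedule (X/2)(v + w) equals (X/2, 0, …, 0, X/2)ᵀ. -/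
open Matrix

/-- A matrix whose symmetric part is positive definite of the form `c J + d I` is invertible. -/
theorem aux_det {n : ℕ} (M : Matrix (Fin n) (Fin n) ℝ) (c d : ℝ) (hc : 0 ≤ c) (hd : 0 < d)
    (h : ∀ i j, M i j + M j i = c + if i = j then d else 0) : IsUnit M.det := by
  rw [isUnit_iff_ne_zero]
  intro h0
  obtain ⟨x, hx, hMx⟩ := Matrix.exists_mulVec_eq_zero_iff.mpr h0
  apply hx
  have h1 : ∑ i, ∑ j, x i * (M i j * x j) = 0 := by
    apply Finset.sum_eq_zero
    intro i _
    rw [← Finset.mul_sum]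
    have : ∑ j, M i j * x j = 0 := congrFun hMx i
    rw [this, mul_zero]
  have h2 : ∑ i, ∑ j, x j * (M j i * x i) = 0 := by
    rw [Finset.sum_comm]; exact h1
  have h3 : ∑ i, ∑ j, (c * (x i * x j) + if i = j then d * (x i * x j) else 0) = 0 := by
    have : ∑ i, ∑ j, (x i * (M i j * x j) + x j * (M j i * x i)) = 0 := by
      simp only [Finset.sum_add_distrib]
      rw [h1, h2, add_zero]
    refine Eq.trans ?_ this
    refine Finset.sum_congr rfl fun i _ => Finset.sum_congr rfl fun j _ => ?_
    have := h i j
    have e1 : x i * (M i j * x j) + x j * (M j i * x i) = (M i j + M j i) * (x i * x j) := by ring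
    rw [e1, this]
    split_ifs <;> ring
  have h4 : c * ((∑ i, x i) * ∑ i, x i) + d * ∑ i, x i * x i = 0 := by
    rw [← h3, Finset.sum_mul_sum]
    simp [Finset.sum_add_distrib, Finset.mul_sum]
  have h5 : 0 ≤ c * ((∑ i, x i) * ∑ i, x i) := mul_nonneg hc (mul_self_nonneg _)
  have h6 : 0 ≤ ∑ i, x i * x i := Finset.sum_nonneg fun i _ => mul_self_nonneg _
  have h7 : ∑ i, x i * x i = 0 := by nlinarith
  rw [Finset.sum_eq_zero_iff_of_nonneg (fun i _ => mul_self_nonneg _)] at h7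
  funext i
  exact mul_self_eq_zero.mp (h7 i (Finset.mem_univ i))

/-- If column `k` of an invertible matrix is constant, the fundamental solution is a basis vector. -/
theorem aux_sol_s17 {n : ℕ} (M : Matrix (Fin n) (Fin n) ℝ) (hM : IsUnit M.det) (k : Fin n) (a : ℝ)
    (ha : a ≠ 0) (hk : ∀ i, M i k = a) (e : Fin n → ℝ) (he : e = fun _ => 1) :
    (e ⬝ᵥ (M⁻¹ *ᵥ e))⁻¹ • (M⁻¹ *ᵥ e) = Pi.single k 1 := by
  have h1 : M *ᵥ (Pi.single k a⁻¹) = e := by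
    funext i
    simp [he, hk, ha]
  have h2 : M⁻¹ *ᵥ e = Pi.single k a⁻¹ := by
    rw [← h1, Matrix.mulVec_mulVec, Matrix.nonsing_inv_mul _ hM, Matrix.one_mulVec]
  rw [h2, dotProduct_single, he, ← Pi.single_smul]
  simp [ha]

/-- If `θ = G/4`, the fundamental solutions of the Schied–Zhang market impact game with
constant kernel `G` are the standard basis vectors `v = (1,0,…,0)ᵀ` and
`w = (0,…,0,1)ᵀ`, and consequently the directional trader's Nash-equilibrium schedule
`(X/2)(v + w)` equals `(X/2, 0, …, 0, X/2)ᵀ`. -/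
theorem stmt_17 (N : ℕ) (hN : 1 ≤ N) (G θ X : ℝ) (hG : 0 < G) (hθ : θ = G/4)
    (Γ Γθ Γt : Matrix (Fin (N+1)) (Fin (N+1)) ℝ)
    (hΓ : ∀ i j : Fin (N+1), Γ i j = G)
    (hΓθ : Γθ = Γ + (2*θ) • (1 : Matrix (Fin (N+1)) (Fin (N+1)) ℝ))
    (hΓt : ∀ i j : Fin (N+1), Γt i j = if j < i then G else if i = j then G/2 else 0)
    (e : Fin (N+1) → ℝ) (he : e = fun _ => 1)
    (v w : Fin (N+1) → ℝ)
    (hv : v = (e ⬝ᵥ ((Γθ + Γt)⁻¹ *ᵥ e))⁻¹ • ((Γθ + Γt)⁻¹ *ᵥ e))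
    (hw : w = (e ⬝ᵥ ((Γθ - Γt)⁻¹ *ᵥ e))⁻¹ • ((Γθ - Γt)⁻¹ *ᵥ e)) :
    v = Pi.single (0 : Fin (N+1)) 1 ∧
    w = Pi.single (Fin.last N) 1 ∧
    ∀ i : Fin (N+1),
      ((X/2) • (v + w)) i = if i.val = 0 ∨ i.val = N then X/2 else 0 := by
  have h1 : v = Pi.single (0 : Fin (N+1)) 1 := by
    rw [hv]
    refine aux_sol_s17 _ (aux_det _ (3*G) G (by positivity) hG ?_) 0 (2*G) (by positivity) ?_ e he
    · intro i j
      rcases lt_trichotomy i j with h | h | h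
      · simp [hΓθ, hΓ, hΓt, hθ, h, h.ne, h.ne', h.not_gt]; ring
      · subst h
        simp [hΓθ, hΓ, hΓt, hθ]; ring
      · simp [hΓθ, hΓ, hΓt, hθ, h, h.ne, h.ne', h.not_gt]; ring
    · intro i
      rcases (Fin.zero_le i).eq_or_lt with h | h
      · subst h
        simp [hΓθ, hΓ, hΓt, hθ]; ring
      · simp [hΓθ, hΓ, hΓt, hθ, h, h.ne']; ring
  have h2 : w = Pi.single (Fin.last N) 1 := by
    rw [hw]
    refine aux_sol_s17 _ (aux_det _ G G hG.le hG ?_) (Fin.last N) G hG.ne' ?_ e he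
    · intro i j
      rcases lt_trichotomy i j with h | h | h
      · simp [hΓθ, hΓ, hΓt, hθ, h, h.ne, h.ne', h.not_gt]
      · subst h
        simp [hΓθ, hΓ, hΓt, hθ]; ring
      · simp [hΓθ, hΓ, hΓt, hθ, h, h.ne, h.ne', h.not_gt]
    · intro i
      rcases (Fin.le_last i).eq_or_lt with h | h
      · subst h
        simp [hΓθ, hΓ, hΓt, hθ]; ring
      · simp [hΓθ, hΓ, hΓt, hθ, h.ne, h.not_gt]
  refine ⟨h1, h2, fun i => ?_⟩
  rw [h1, h2]
  simp only [Pi.smul_apply, Pi.add_apply, Pi.single_apply, Fin.ext_iff, Fin.val_last,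
    Fin.val_zero, smul_eq_mul]
  by_cases ha : i.val = 0
  · have hb : i.val ≠ N := by omega
    have hc : (0 : ℕ) ≠ N := by omega
    simp [ha, hc]
  · by_cases hb : i.val = N
    · have hc : N ≠ 0 := by omega
      simp [hb, hc]
    · simp [ha, hb]
end

section
/- Let α, β ∈ ℝ and let Γ be the (N+1)×(N+1) matrix with entries Γ_{ij} = α + β·|i−j|/N (the kernel matrix of the linear decay kernel G(t) = α + βt on the equidistant grid t_i = i/N, with no transaction costs). Let u = (1/2)(e_1 + e_{N+1}) ∈ ℝ^{N+1}, where e_1 and e_{N+1} are the first and last standard basis vectors. Then Γ·u = (α + β/2)·e, where e = (1,…,1)ᵀ. Consequently, if Γ is invertible and α + β/2 ≠ 0, then eᵀΓ^{−1}e ≠ 0 and Γ^{−1}e / (eᵀΓ^{−1}e) = u; i.e. the optimal execution schedule of the Transient Impact Model with any linear kernel and zero transaction costs places half the inventory at the first trading time and half at the last, regardless of α and β. -/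
open Matrix

/-- For a linear kernel matrix `Γ_{ij} = α + β·|i−j|/N` on the equidistant grid and
`u = (1/2)(e_1 + e_{N+1})`, one has `Γ·u = (α + β/2)·e`; consequently, if `Γ` is
invertible and `α + β/2 ≠ 0`, then `eᵀΓ⁻¹e ≠ 0` and `Γ⁻¹e/(eᵀΓ⁻¹e) = u`: the optimal
execution schedule with any linear kernel and zero transaction costs places half the
inventory at the first trading time and half at the last. -/
theorem stmt_18 (N : ℕ) (hN : 1 ≤ N) (α β : ℝ)
    (Γ : Matrix (Fin (N+1)) (Fin (N+1)) ℝ)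
    (hΓ : ∀ i j : Fin (N+1), Γ i j = α + β * (Nat.dist i.val j.val) / N)
    (u e : Fin (N+1) → ℝ)
    (hu : u = (1/2 : ℝ) • (Pi.single (0 : Fin (N+1)) 1 + Pi.single (Fin.last N) 1))
    (he : e = fun _ => 1) :
    Γ *ᵥ u = (α + β/2) • e ∧
    (IsUnit Γ → α + β/2 ≠ 0 →
      e ⬝ᵥ (Γ⁻¹ *ᵥ e) ≠ 0 ∧ (e ⬝ᵥ (Γ⁻¹ *ᵥ e))⁻¹ • (Γ⁻¹ *ᵥ e) = u) := by
  have hN' : (N : ℝ) ≠ 0 := by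
    have : N ≠ 0 := by omega
    exact_mod_cast this
  have h1 : Γ *ᵥ u = (α + β/2) • e := by
    rw [hu, he, Matrix.mulVec_smul, Matrix.mulVec_add, Matrix.mulVec_single_one,
      Matrix.mulVec_single_one]
    ext i
    have hi : i.val ≤ N := Nat.lt_succ_iff.mp i.isLt
    have d0 : Nat.dist i.val 0 = i.val := Nat.dist_zero_right _
    have d1 : ((Nat.dist i.val N : ℕ) : ℝ) = N - i.val := by
      rw [Nat.dist_eq_sub_of_le hi, Nat.cast_sub hi]
    simp only [Pi.smul_apply, Pi.add_apply, Matrix.col_apply, smul_eq_mul, hΓ, Fin.val_zero,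
      Fin.val_last, d0, d1]
    field_simp
    ring
  refine ⟨h1, fun hU hc => ?_⟩
  have hdet : IsUnit Γ.det := (Matrix.isUnit_iff_isUnit_det Γ).mp hU
  have h2 : u = (α + β/2) • (Γ⁻¹ *ᵥ e) := by
    rw [← Matrix.mulVec_smul, ← h1, Matrix.mulVec_mulVec, Matrix.nonsing_inv_mul _ hdet,
      Matrix.one_mulVec]
  have h3 : e ⬝ᵥ u = 1 := by
    rw [hu, he]
    simp [dotProduct_add]
    try norm_num
  have h4 : (α + β/2) * (e ⬝ᵥ (Γ⁻¹ *ᵥ e)) = 1 := by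
    rw [← h3]
    conv_rhs => rw [h2]
    rw [dotProduct_smul, smul_eq_mul]
  refine ⟨fun h0 => by simp [h0] at h4, ?_⟩
  rw [← eq_inv_of_mul_eq_one_left h4]
  exact h2.symm
end

section
/- Let G > 0, θ > 0, S ∈ ℝ, and define the expected one-period cost of the myopic market impact game by f(x, y) = (G/2)x² − Sx + (G/2)xy + θx² for x, y ∈ ℝ. Then: (i) for each fixed y ∈ ℝ, the function x ↦ f(x, y) has the unique minimizer x = (S − (G/2)y)/(G + 2θ) (the best response); (ii) the unique pair (x*, y*) ∈ ℝ² in which each coordinate is the best response to the other is x* = y* = 2S/(3G + 4θ), the Nash equilibrium of the one-period game; and (iii) setting α = 2/(3G + 4θ), one has 1 − 2αG < 1, and 1 − 2αG > 0 if and only if θ > G/4. -/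
/-- Myopic one-period market impact game with cost
`f(x,y) = (G/2)x² − Sx + (G/2)xy + θx²`:
(i) for each `y`, the unique minimizer of `x ↦ f(x,y)` is the best response
`br y = (S − (G/2)y)/(G + 2θ)`;
(ii) the unique mutual best-response pair is `x* = y* = 2S/(3G + 4θ)`;
(iii) with `α = 2/(3G + 4θ)`, one has `1 − 2αG < 1`, and `1 − 2αG > 0 ↔ θ > G/4`. -/
theorem stmt_19 (G θ S : ℝ) (hG : 0 < G) (hθ : 0 < θ)
    (f : ℝ → ℝ → ℝ)
    (hf : ∀ x y : ℝ, f x y = (G/2)*x^2 - S*x + (G/2)*x*y + θ*x^2)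
    (br : ℝ → ℝ) (hbr : ∀ y : ℝ, br y = (S - (G/2)*y)/(G + 2*θ)) :
    (∀ y x : ℝ, x ≠ br y → f (br y) y < f x y) ∧
    (∀ x y : ℝ, (x = br y ∧ y = br x) ↔
      (x = 2*S/(3*G + 4*θ) ∧ y = 2*S/(3*G + 4*θ))) ∧
    (1 - 2*(2/(3*G + 4*θ))*G < 1 ∧ (0 < 1 - 2*(2/(3*G + 4*θ))*G ↔ G/4 < θ)) := by
  have hA : 0 < G + 2*θ := by positivity
  have hB : 0 < 3*G + 4*θ := by positivity
  refine ⟨?_, ?_, ?_, ?_⟩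
  · intro y x hx
    have hb : br y * (G + 2*θ) = S - (G/2)*y := by
      rw [hbr]; field_simp
    have hsq : 0 < (x - br y)^2 := by
      have := sub_ne_zero.mpr hx
      positivity
    have key : f x y - f (br y) y = (G + 2*θ)/2 * (x - br y)^2 := by
      rw [hf, hf]
      linear_combination (x - br y) * hb
    have : 0 < (G + 2*θ)/2 * (x - br y)^2 := by positivity
    linarith
  · intro x y
    rw [hbr, hbr, eq_div_iff hA.ne', eq_div_iff hA.ne', eq_div_iff hB.ne', eq_div_iff hB.ne']
    constructor
    · rintro ⟨h1, h2⟩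
      have hxy : x = y := by
        have h3 : (x - y) * (G/2 + 2*θ) = 0 := by linear_combination h1 - h2
        have h4 : G/2 + 2*θ ≠ 0 := by positivity
        exact sub_eq_zero.mp ((mul_eq_zero.mp h3).resolve_right h4)
      subst hxy
      constructor <;> linear_combination 2 * h1
    · rintro ⟨h1, h2⟩
      have hxy : x = y := mul_right_cancel₀ hB.ne' (h1.trans h2.symm)
      subst hxy
      constructor <;> linear_combination h1 / 2
  · have : 0 < 2*(2/(3*G + 4*θ))*G := by positivity
    linarith
  · have h : 1 - 2*(2/(3*G + 4*θ))*G = (4*θ - G)/(3*G + 4*θ) := by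
      field_simp
      ring
    rw [h, div_pos_iff_of_pos_right hB]
    constructor <;> intro h <;> linarith
end
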